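/- arXiv:2101.00228 — 2 statements merged into one kernel-verified Lean document; each statement's English description precedes it below -/
import Mathlib

section
/- Let n ≥ 2 and 0 < λ ≤ Λ. There is a constant c ∈ (0,1) depending only on n, λ, Λ with the following property: if u is continuous on B₁⁺ ∪ T₁, belongs to the viscosity Pucci class S(λ,Λ,0) in B₁⁺, satisfies u ≥ 0 in B₁⁺, u = 0 on T₁, and u(eₙ/2) ≥ 1, then u(x) ≥ c·xₙ for all x ∈ B⁺_{1/2}. -/
open MeasureTheory Set

noncomputable section

/-- Euclidean space `ℝⁿ`. -/
abbrev EucSp (n : ℕ) := EuclideanSpace ℝ (Fin n)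

/-- The last coordinate `xₙ` of a point `x ∈ ℝⁿ`. -/
def lastCoord (n : ℕ) (x : EucSp n) : ℝ :=
  if h : 0 < n then x ⟨n - 1, Nat.sub_lt h Nat.one_pos⟩ else 0

/-- The standard basis vector `eₙ`. -/
def lastBasis (n : ℕ) : EucSp n :=
  if h : 0 < n then EuclideanSpace.single ⟨n - 1, Nat.sub_lt h Nat.one_pos⟩ 1 else 0

/-- The norm `|x′|` of the horizontal part of `x = (x′, xₙ)`. -/
def primeNorm (n : ℕ) (x : EucSp n) : ℝ := ‖x - lastCoord n x • lastBasis n‖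

/-- The Hessian matrix `D²φ(x)` of a function `φ` at `x`. -/
def hessianMatrix (n : ℕ) (φ : EucSp n → ℝ) (x : EucSp n) : Matrix (Fin n) (Fin n) ℝ :=
  Matrix.of fun i j =>
    iteratedFDeriv ℝ 2 φ x ![EuclideanSpace.single i 1, EuclideanSpace.single j 1]

/-- `A` is a symmetric matrix with `λ I ≼ A ≼ Λ I` in the Loewner order. -/
def IsElliptic (n : ℕ) (lam Lam : ℝ) (A : Matrix (Fin n) (Fin n) ℝ) : Prop :=
  A.IsSymm ∧ (A - lam • (1 : Matrix (Fin n) (Fin n) ℝ)).PosSemidef ∧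
    ((Lam • (1 : Matrix (Fin n) (Fin n) ℝ)) - A).PosSemidef

/-- The viscosity Pucci class `S*(λ, Λ, f)` on an open set `U`. For `f = 0` this is
the class `S(λ, Λ, 0)`. -/
def InPucciStar (n : ℕ) (lam Lam : ℝ) (f : EucSp n → ℝ) (U : Set (EucSp n))
    (u : EucSp n → ℝ) : Prop :=
  ∀ φ : EucSp n → ℝ, ContDiff ℝ 2 φ →
    (∀ x ∈ U, IsLocalMaxOn (fun y => u y - φ y) U x →
      ∃ A : Matrix (Fin n) (Fin n) ℝ, IsElliptic n lam Lam A ∧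
        -|f x| ≤ (A * hessianMatrix n φ x).trace) ∧
    (∀ x ∈ U, IsLocalMinOn (fun y => u y - φ y) U x →
      ∃ A : Matrix (Fin n) (Fin n) ℝ, IsElliptic n lam Lam A ∧
        (A * hessianMatrix n φ x).trace ≤ |f x|)

/-- The `Lⁿ` norm `‖f‖_{Lⁿ(E)} = (∫_E |f|ⁿ)^{1/n}`. -/
def lnNorm (n : ℕ) (f : EucSp n → ℝ) (E : Set (EucSp n)) : ℝ :=
  (∫ x in E, |f x| ^ (n : ℝ)) ^ ((n : ℝ)⁻¹)

/-- A modulus of continuity: nonnegative, nondecreasing on `[0,∞)`, tending to `0` at `0⁺`. -/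
def IsModulus (ω : ℝ → ℝ) : Prop :=
  (∀ r, 0 ≤ ω r) ∧ MonotoneOn ω (Ici 0) ∧
    Filter.Tendsto ω (nhdsWithin 0 (Ioi 0)) (nhds 0)

/-- A Dini function: a modulus of continuity with `∫₀¹ ω(r)/r dr < ∞`. -/
def IsDini (ω : ℝ → ℝ) : Prop :=
  IsModulus ω ∧ IntegrableOn (fun r => ω r / r) (Ioc 0 1) volume

/-- The upper half ball `B_r⁺`. -/
def upperHalfBall (n : ℕ) (r : ℝ) : Set (EucSp n) :=
  {x | x ∈ Metric.ball (0 : EucSp n) r ∧ 0 < lastCoord n x}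

/-- The flat part `T_r = B_r ∩ {xₙ = 0}`. -/
def flatPart (n : ℕ) (r : ℝ) : Set (EucSp n) :=
  {x | x ∈ Metric.ball (0 : EucSp n) r ∧ lastCoord n x = 0}

/-!
Slide concave paraboloids of opening `a`, with vertices `y` filling a small ball, upwards until they
touch a supersolution `u` at points `x`. Near a contact point `u` lies above every contact
paraboloid, and comparison with a quadratic barrier in a slab bounds how much their slopes can
differ, so `y` is a Lipschitz function of `x`. Hence the contact points fill a fixed fraction of the
volume, which is the point-to-measure estimate. A Vitali covering argument iterates it into
geometric decay of the superlevel sets of `u` around a point where `u` is small. If a solution `u`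
were very large somewhere, then at a point maximizing `u` times a power of the distance to the
boundary the decay for `c - u` would contradict the decay for `u`. So `u ≤ C u(x₀)` near `x₀`, which
is the Harnack inequality.

Comparing with Hopf's exponential barrier turns it into `u(x) ≥ η u(x₀) (1 - |x - x₀| / ρ)` on every
ball `B_ρ(x₀)` where `u ≥ 0` is a solution. A chain of balls carries the value at `eₙ/2` to all
points at distance at least `1 / 4` from the boundary. The last ball has radius `1 / 4` and is
centred above `x`, which lies at distance `xₙ / 2` from its sphere, whence the linear lower bound.
-/

open Metric

open scoped Matrix RealInnerProductSpace Topology ENNReal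

section

variable {n : ℕ} {lam Lam : ℝ}

/-! ### Ellipticity and Hessians -/

theorem IsElliptic.trace_le {A : Matrix (Fin n) (Fin n) ℝ} (hA : IsElliptic n lam Lam A) :
    A.trace ≤ n * Lam := by
  have h := hA.2.2.trace_nonneg
  simp only [Matrix.trace_sub, Matrix.trace_smul, Matrix.trace_one, Fintype.card_fin,
    smul_eq_mul] at h
  linarith

theorem IsElliptic.mul_norm_sq_le {A : Matrix (Fin n) (Fin n) ℝ} (hA : IsElliptic n lam Lam A)
    (v : EucSp n) : lam * ‖v‖ ^ 2 ≤ v ⬝ᵥ A *ᵥ v := by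
  have h := hA.2.1.dotProduct_mulVec_nonneg v.ofLp
  rw [star_trivial, Matrix.sub_mulVec, dotProduct_sub, Matrix.smul_mulVec, Matrix.one_mulVec,
    dotProduct_smul, smul_eq_mul] at h
  have hv : v.ofLp ⬝ᵥ v.ofLp = ‖v‖ ^ 2 := by
    rw [EuclideanSpace.real_norm_sq_eq]
    simp only [dotProduct, sq]
  rw [hv] at h
  linarith

theorem IsElliptic.trace_mul_pos {A : Matrix (Fin n) (Fin n) ℝ} (hA : IsElliptic n lam Lam A)
    {α β : ℝ} {v : EucSp n} (hα : 0 ≤ α) (hβ : 0 ≤ β)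
    (h : α * (n * Lam) < β * (lam * ‖v‖ ^ 2)) :
    0 < (A * (-α • (1 : Matrix (Fin n) (Fin n) ℝ) + β • Matrix.vecMulVec v v)).trace := by
  have htrace : (A * (-α • (1 : Matrix (Fin n) (Fin n) ℝ) + β • Matrix.vecMulVec v v)).trace =
      -α * A.trace + β * (v ⬝ᵥ A *ᵥ v) := by
    rw [mul_add, Matrix.trace_add, Matrix.mul_smul, Matrix.mul_smul, mul_one, Matrix.trace_smul,
      Matrix.trace_smul, Matrix.mul_vecMulVec, Matrix.trace_vecMulVec, smul_eq_mul, smul_eq_mul,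
      dotProduct_comm]
  have h1 := mul_le_mul_of_nonneg_left hA.trace_le hα
  have h2 := mul_le_mul_of_nonneg_left (hA.mul_norm_sq_le v) hβ
  rw [htrace]
  linarith

theorem hessianMatrix_neg (φ : EucSp n → ℝ) (x : EucSp n) :
    hessianMatrix n (-φ) x = -hessianMatrix n φ x := by
  ext i j
  simp [hessianMatrix, iteratedFDeriv_neg]

theorem hessianMatrix_apply_of_hasGradientAt {φ : EucSp n → ℝ} {G : EucSp n → EucSp n}
    {G' : EucSp n →L[ℝ] EucSp n} {x : EucSp n} (hφ : ∀ y, HasGradientAt φ (G y) y)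
    (hG : HasFDerivAt G G' x) (i j : Fin n) :
    hessianMatrix n φ x i j = G' (EuclideanSpace.single i 1) j := by
  have hfderiv : fderiv ℝ φ = fun y => innerSL ℝ (G y) :=
    funext fun y => (hφ y).hasFDerivAt.fderiv
  have hfderiv' : HasFDerivAt (fun y => innerSL ℝ (G y)) ((innerSL ℝ).comp G') x :=
    (innerSL ℝ (E := EucSp n)).hasFDerivAt.comp x hG
  simp only [hessianMatrix, Matrix.of_apply, iteratedFDeriv_two_apply, hfderiv, hfderiv'.fderiv]
  simp [EuclideanSpace.inner_single_right]

theorem hessianMatrix_eq_of_hasGradientAt {φ : EucSp n → ℝ} {G : EucSp n → EucSp n}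
    {G' : EucSp n →L[ℝ] EucSp n} {x v : EucSp n} {α β : ℝ} (hφ : ∀ y, HasGradientAt φ (G y) y)
    (hG : HasFDerivAt G G' x) (hG' : ∀ w, G' w = -α • w + (β * ⟪v, w⟫) • v) :
    hessianMatrix n φ x = -α • (1 : Matrix (Fin n) (Fin n) ℝ) + β • Matrix.vecMulVec v v := by
  ext i j
  rw [hessianMatrix_apply_of_hasGradientAt hφ hG, hG']
  simp [EuclideanSpace.inner_single_right, Matrix.one_apply, Matrix.vecMulVec_apply, eq_comm,
    mul_assoc]

/-! ### Viscosity supersolutions -/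

/-- Continuous viscosity supersolutions on `U` of the Pucci equation: at a point where a `C²`
function touches `u` from below, some elliptic matrix `A` has `tr (A D²φ) ≤ 0`. This is the half of
the class `S(λ, Λ, 0)` that sees tests from below, for open `U`. -/
structure IsPucciSupersolution (n : ℕ) (lam Lam : ℝ) (U : Set (EucSp n)) (u : EucSp n → ℝ) :
    Prop where
  continuousOn : ContinuousOn u U
  exists_trace_nonpos : ∀ φ : EucSp n → ℝ, ContDiff ℝ 2 φ → ∀ x ∈ U,
    IsLocalMin (fun y => u y - φ y) x →
      ∃ A, IsElliptic n lam Lam A ∧ (A * hessianMatrix n φ x).trace ≤ 0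

variable {U V : Set (EucSp n)} {u : EucSp n → ℝ}

theorem InPucciStar.isPucciSupersolution (hu : InPucciStar n lam Lam 0 U u)
    (hc : ContinuousOn u U) : IsPucciSupersolution n lam Lam U u where
  continuousOn := hc
  exists_trace_nonpos φ hφ x hx hmin := by simpa using (hu φ hφ).2 x hx (hmin.on U)

theorem InPucciStar.isPucciSupersolution_const_sub (hu : InPucciStar n lam Lam 0 U u)
    (hc : ContinuousOn u U) (c : ℝ) :
    IsPucciSupersolution n lam Lam U (fun x => c - u x) where
  continuousOn := continuousOn_const.sub hc
  exists_trace_nonpos φ hφ x hx hmin := by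
    have hmax : IsLocalMaxOn (fun y => u y - (-φ) y) U x := by
      refine IsLocalMax.on (hmin.mono fun y hy => ?_) U
      simp only [Pi.neg_apply]
      linarith
    obtain ⟨A, hA, htrace⟩ := (hu (-φ) hφ.neg).1 x hx hmax
    exact ⟨A, hA, by simpa [hessianMatrix_neg] using htrace⟩

theorem IsPucciSupersolution.mono (hu : IsPucciSupersolution n lam Lam U u) (hVU : V ⊆ U) :
    IsPucciSupersolution n lam Lam V u where
  continuousOn := hu.continuousOn.mono hVU
  exists_trace_nonpos φ hφ x hx := hu.exists_trace_nonpos φ hφ x (hVU hx)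

/-- **Comparison** with a strict classical subsolution `φ`. -/
theorem IsPucciSupersolution.le_of_trace_pos (hu : IsPucciSupersolution n lam Lam U u)
    {φ : EucSp n → ℝ} (hφ : ContDiff ℝ 2 φ) {K W : Set (EucSp n)} (hK : IsCompact K)
    (hKU : K ⊆ U) (hW : IsOpen W) (hWK : W ⊆ K) (hle : ∀ x ∈ K \ W, φ x ≤ u x)
    (hpos : ∀ x ∈ W, ∀ A, IsElliptic n lam Lam A → 0 < (A * hessianMatrix n φ x).trace) :
    ∀ x ∈ K, φ x ≤ u x := by
  intro x hx
  obtain ⟨y, hyK, hmin⟩ := hK.exists_isMinOn ⟨x, hx⟩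
    ((hu.continuousOn.mono hKU).sub hφ.continuous.continuousOn)
  have hyW : y ∉ W := fun hyW => by
    obtain ⟨A, hA, htrace⟩ := hu.exists_trace_nonpos φ hφ y (hKU hyK)
      (hmin.isLocalMin (Filter.mem_of_superset (hW.mem_nhds hyW) hWK))
    exact (hpos y hyW A hA).not_ge htrace
  have hxy : u y - φ y ≤ u x - φ x := hmin hx
  linarith [hle y ⟨hyK, hyW⟩]

/-! ### The Hopf barrier -/

/-- The exponential barrier of Hopf, centred at `z` and vanishing on the sphere of radius `ρ`. -/
def hopfBarrier (α m : ℝ) (z : EucSp n) (ρ : ℝ) (x : EucSp n) : ℝ :=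
  m * (Real.exp (-α * ‖x - z‖ ^ 2) - Real.exp (-α * ρ ^ 2))

theorem contDiff_hopfBarrier (α m : ℝ) (z : EucSp n) (ρ : ℝ) :
    ContDiff ℝ 2 (hopfBarrier α m z ρ) := by
  have hsq : ContDiff ℝ 2 fun x : EucSp n => ‖x - z‖ ^ 2 :=
    (contDiff_id.sub contDiff_const).norm_sq ℝ
  exact contDiff_const.mul ((Real.contDiff_exp.comp (contDiff_const.mul hsq)).sub contDiff_const)

theorem hasFDerivAt_exp_neg_mul_norm_sub_sq (α : ℝ) (z x : EucSp n) :
    HasFDerivAt (fun y : EucSp n => Real.exp (-α * ‖y - z‖ ^ 2))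
      (innerSL ℝ ((-(2 * α) * Real.exp (-α * ‖x - z‖ ^ 2)) • (x - z))) x := by
  refine (((hasFDerivAt_id x).sub_const z).norm_sq.const_mul (-α)).exp.congr_fderiv ?_
  ext w
  simp
  ring

theorem hasGradientAt_hopfBarrier (α m : ℝ) (z : EucSp n) (ρ : ℝ) (x : EucSp n) :
    HasGradientAt (hopfBarrier α m z ρ)
      ((-(2 * α * m) * Real.exp (-α * ‖x - z‖ ^ 2)) • (x - z)) x := by
  refine (((hasFDerivAt_exp_neg_mul_norm_sub_sq α z x).sub_const
    (Real.exp (-α * ρ ^ 2))).const_mul m).congr_fderiv ?_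
  ext w
  simp
  ring

theorem hessianMatrix_hopfBarrier (α m : ℝ) (z : EucSp n) (ρ : ℝ) (x : EucSp n) :
    hessianMatrix n (hopfBarrier α m z ρ) x =
      -(2 * α * m * Real.exp (-α * ‖x - z‖ ^ 2)) • (1 : Matrix (Fin n) (Fin n) ℝ) +
        (4 * α ^ 2 * m * Real.exp (-α * ‖x - z‖ ^ 2)) • Matrix.vecMulVec (x - z) (x - z) := by
  refine hessianMatrix_eq_of_hasGradientAt (hasGradientAt_hopfBarrier α m z ρ)
    (((hasFDerivAt_exp_neg_mul_norm_sub_sq α z x).const_mul (-(2 * α * m))).smul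
      ((hasFDerivAt_id x).sub_const z)) fun w => ?_
  simp [inner_sub_left]
  congr 1
  ring

theorem IsPucciSupersolution.hopfBarrier_le (hu : IsPucciSupersolution n lam Lam U u)
    (hlam : 0 < lam) {z : EucSp n} {ρ ρ₁ m α : ℝ} (hα : 0 < α) (hm : 0 < m) (hρ₁ : 0 < ρ₁)
    (hαρ₁ : n * Lam < 2 * α * (lam * ρ₁ ^ 2)) (hball : closedBall z ρ ⊆ U)
    (hnonneg : ∀ x ∈ closedBall z ρ, 0 ≤ u x) (hle : ∀ x ∈ closedBall z ρ₁, m ≤ u x) :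
    ∀ x ∈ closedBall z ρ, hopfBarrier α m z ρ x ≤ u x := by
  refine hu.le_of_trace_pos (contDiff_hopfBarrier α m z ρ) (isCompact_closedBall z ρ) hball
    (W := ball z ρ \ closedBall z ρ₁) (isOpen_ball.sdiff isClosed_closedBall)
    (sdiff_subset.trans ball_subset_closedBall) (fun x ⟨hxK, hxW⟩ => ?_) (fun x hx A hA => ?_)
  · by_cases hx₁ : x ∈ closedBall z ρ₁
    · have hexp : Real.exp (-α * ‖x - z‖ ^ 2) ≤ 1 :=
        Real.exp_le_one_iff.2 (by nlinarith [sq_nonneg ‖x - z‖])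
      have hexp' := Real.exp_pos (-α * ρ ^ 2)
      refine le_trans ?_ (hle x hx₁)
      rw [hopfBarrier]
      exact mul_le_of_le_one_right hm.le (by linarith)
    · have hxρ : ‖x - z‖ = ρ := by
        rw [← dist_eq_norm]
        exact le_antisymm hxK (not_lt.1 fun h => hxW ⟨h, hx₁⟩)
      simpa [hopfBarrier, hxρ] using hnonneg x hxK
  · have hρx : ρ₁ < ‖x - z‖ := by simpa [dist_eq_norm] using hx.2
    have hαx : n * Lam < 2 * α * (lam * ‖x - z‖ ^ 2) := hαρ₁.trans (by gcongr)
    rw [hessianMatrix_hopfBarrier]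
    refine hA.trace_mul_pos (by positivity) (by positivity) ?_
    calc 2 * α * m * Real.exp (-α * ‖x - z‖ ^ 2) * (n * Lam)
        < 2 * α * m * Real.exp (-α * ‖x - z‖ ^ 2) * (2 * α * (lam * ‖x - z‖ ^ 2)) := by
          gcongr
      _ = _ := by ring

theorem IsPucciSupersolution.hopfBarrier_le_of_mem_ball {z : EucSp n} {ρ ρ₁ m α : ℝ}
    (hu : IsPucciSupersolution n lam Lam (ball z ρ) u) (hlam : 0 < lam) (hα : 0 < α) (hm : 0 < m)
    (hρ₁ : 0 < ρ₁) (hαρ₁ : n * Lam < 2 * α * (lam * ρ₁ ^ 2)) (hnonneg : ∀ x ∈ ball z ρ, 0 ≤ u x)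
    (hle : ∀ x ∈ closedBall z ρ₁, m ≤ u x) :
    ∀ x ∈ ball z ρ, hopfBarrier α m z ρ x ≤ u x := by
  intro x hx
  have hcont : Continuous fun r => hopfBarrier α m z r x := by
    unfold hopfBarrier
    fun_prop
  refine le_of_tendsto ((hcont.tendsto ρ).mono_left (nhdsWithin_le_nhds (s := Iio ρ))) ?_
  filter_upwards [Ioo_mem_nhdsLT hx] with r hr
  have hball : closedBall z r ⊆ ball z ρ := closedBall_subset_ball hr.2
  exact hu.hopfBarrier_le hlam hα hm hρ₁ hαρ₁ hball (fun y hy => hnonneg y (hball hy)) hle x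
    (mem_closedBall.2 hr.1.le)

theorem mul_one_sub_div_le_hopfBarrier {A m ρ : ℝ} (hA : 0 ≤ A) (hm : 0 ≤ m) {x z : EucSp n}
    (hx : x ∈ ball z ρ) :
    A * Real.exp (-A) * m * (1 - dist x z / ρ) ≤ hopfBarrier (A / ρ ^ 2) m z ρ x := by
  have hρ : 0 < ρ := pos_of_mem_ball hx
  have ht0 : 0 ≤ dist x z / ρ := by positivity
  have ht1 : dist x z / ρ ≤ 1 := (div_le_one hρ).2 (mem_ball.1 hx).le
  have hexp : Real.exp (-(A / ρ ^ 2) * ‖x - z‖ ^ 2) =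
      Real.exp (-A) * Real.exp (A * (1 - (dist x z / ρ) ^ 2)) := by
    rw [← Real.exp_add, dist_eq_norm]
    congr 1
    field_simp
    ring
  have hexp' : Real.exp (-(A / ρ ^ 2) * ρ ^ 2) = Real.exp (-A) := by
    congr 1
    field_simp
  have hsq : A * (1 - dist x z / ρ) ≤ A * (1 - (dist x z / ρ) ^ 2) := by
    gcongr
    exact pow_le_of_le_one ht0 ht1 two_ne_zero
  have hadd := Real.add_one_le_exp (A * (1 - (dist x z / ρ) ^ 2))
  rw [hopfBarrier, hexp, hexp']
  calc A * Real.exp (-A) * m * (1 - dist x z / ρ)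
      = m * (Real.exp (-A) * (A * (1 - dist x z / ρ))) := by ring
    _ ≤ m * (Real.exp (-A) * (Real.exp (A * (1 - (dist x z / ρ) ^ 2)) - 1)) := by
        gcongr
        linarith
    _ = _ := by ring

/-- **Hopf lemma**, in a form invariant under scaling. -/
theorem exists_hopf_constant (n : ℕ) (hlam : 0 < lam) (hLam : lam ≤ Lam) {κ : ℝ} (hκ : 0 < κ) :
    ∃ η > 0, ∀ (u : EucSp n → ℝ) (z : EucSp n) (ρ m : ℝ),
      IsPucciSupersolution n lam Lam (ball z ρ) u → (∀ x ∈ ball z ρ, 0 ≤ u x) →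
      (∀ x ∈ closedBall z (κ * ρ), m ≤ u x) →
      ∀ x ∈ ball z ρ, η * m * (1 - dist x z / ρ) ≤ u x := by
  have hLam0 : 0 < Lam := hlam.trans_le hLam
  set A := n * Lam / (2 * lam * κ ^ 2) + 1 with hA
  have hA0 : 0 < A := by positivity
  refine ⟨A * Real.exp (-A), by positivity, fun u z ρ m hu hnonneg hle x hx => ?_⟩
  have hρ : 0 < ρ := pos_of_mem_ball hx
  rcases le_or_gt m 0 with hm | hm
  · have hdist : 0 ≤ 1 - dist x z / ρ := sub_nonneg.2 ((div_le_one hρ).2 (mem_ball.1 hx).le)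
    exact (mul_nonpos_of_nonpos_of_nonneg (mul_nonpos_of_nonneg_of_nonpos (by positivity) hm)
      hdist).trans (hnonneg x hx)
  · have hscale : n * Lam < 2 * (A / ρ ^ 2) * (lam * (κ * ρ) ^ 2) := by
      have : 2 * (A / ρ ^ 2) * (lam * (κ * ρ) ^ 2) = n * Lam + 2 * lam * κ ^ 2 := by
        rw [hA]
        field_simp
      rw [this]
      exact lt_add_of_pos_right _ (by positivity)
    exact (mul_one_sub_div_le_hopfBarrier hA0.le hm.le hx).trans
      (hu.hopfBarrier_le_of_mem_ball hlam (by positivity) hm (by positivity) hscale hnonneg hle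
        x hx)

/-! ### Sliding paraboloids -/

/-- The test function added to a paraboloid near a contact point. It vanishes on the hyperplane
`⟪e, v⟫ = -d`, and for large `‖v‖` the term with `γ` makes it negative on the slab
`-d ≤ ⟪e, v⟫ ≤ 2 d`. -/
def slabBarrier (d γ : ℝ) (e v : EucSp n) : ℝ :=
  (⟪e, v⟫ + d) ^ 2 - γ * (‖v‖ ^ 2 - ⟪e, v⟫ ^ 2)

theorem slabBarrier_le {d γ : ℝ} (hγ : 0 ≤ γ) {e : EucSp n} (he : ‖e‖ = 1) (v : EucSp n) :
    slabBarrier d γ e v ≤ (⟪e, v⟫ + d) ^ 2 := by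
  have hinner : |⟪e, v⟫| ≤ |‖v‖| := by
    simpa [he] using abs_real_inner_le_norm e v
  exact sub_le_self _ (mul_nonneg hγ (sub_nonneg.2 (sq_le_sq.2 hinner)))

theorem slabBarrier_nonpos {d γ S : ℝ} (hγ : 0 ≤ γ) (hS : 9 ≤ γ * (S ^ 2 - 4)) {e v : EucSp n}
    (hd : -d ≤ ⟪e, v⟫) (hd' : ⟪e, v⟫ ≤ 2 * d) (hv : ‖v‖ = S * d) :
    slabBarrier d γ e v ≤ 0 := by
  have hfar : 9 * d ^ 2 ≤ γ * (S ^ 2 - 4) * d ^ 2 := by gcongr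
  have hsq : (⟪e, v⟫ + d) ^ 2 ≤ (3 * d) ^ 2 := sq_le_sq' (by linarith) (by linarith)
  have hinner : γ * ⟪e, v⟫ ^ 2 ≤ γ * (2 * d) ^ 2 := by
    gcongr γ * ?_
    exact sq_le_sq' (by linarith) hd'
  rw [slabBarrier, hv]
  linarith

/-- A downward paraboloid of opening `a` with vertex `y`, plus `κ` times the slab barrier based
at `x`. -/
def bentParaboloid (a c κ d γ : ℝ) (y x e w : EucSp n) : ℝ :=
  c - a / 2 * ‖w - y‖ ^ 2 + κ * slabBarrier d γ e (w - x)

theorem contDiff_bentParaboloid (a c κ d γ : ℝ) (y x e : EucSp n) :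
    ContDiff ℝ 2 (bentParaboloid a c κ d γ y x e) := by
  have hinner : ContDiff ℝ 2 fun w : EucSp n => ⟪e, w - x⟫ :=
    contDiff_const.inner ℝ (contDiff_id.sub contDiff_const)
  have hsq (z : EucSp n) : ContDiff ℝ 2 fun w : EucSp n => ‖w - z‖ ^ 2 :=
    (contDiff_id.sub contDiff_const).norm_sq ℝ
  exact (contDiff_const.sub (contDiff_const.mul (hsq y))).add (contDiff_const.mul
    (((hinner.add contDiff_const).pow 2).sub (contDiff_const.mul ((hsq x).sub (hinner.pow 2)))))

theorem hasGradientAt_bentParaboloid (a c κ d γ : ℝ) (y x e w : EucSp n) :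
    HasGradientAt (bentParaboloid a c κ d γ y x e)
      (-a • (w - y) + κ • ((2 * (⟪e, w - x⟫ + d) + 2 * γ * ⟪e, w - x⟫) • e -
        (2 * γ) • (w - x))) w := by
  have hinner : HasFDerivAt (fun w : EucSp n => ⟪e, w - x⟫) (innerSL ℝ e) w :=
    (innerSL ℝ e).hasFDerivAt.comp w ((hasFDerivAt_id w).sub_const x)
  have hsq (z : EucSp n) := ((hasFDerivAt_id w).sub_const z).norm_sq
  refine ((((hsq y).const_mul (a / 2)).const_sub c).add ((((hinner.add_const d).pow 2).sub
    (((hsq x).sub (hinner.pow 2)).const_mul γ)).const_mul κ)).congr_fderiv ?_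
  ext v
  simp [-neg_smul]
  ring

theorem hessianMatrix_bentParaboloid (a c κ d γ : ℝ) (y x e w : EucSp n) :
    hessianMatrix n (bentParaboloid a c κ d γ y x e) w =
      -(a + 2 * κ * γ) • (1 : Matrix (Fin n) (Fin n) ℝ) +
        (2 * κ * (1 + γ)) • Matrix.vecMulVec e e := by
  have hinner : HasFDerivAt (fun w : EucSp n => ⟪e, w - x⟫) (innerSL ℝ e) w :=
    (innerSL ℝ e).hasFDerivAt.comp w ((hasFDerivAt_id w).sub_const x)
  refine hessianMatrix_eq_of_hasGradientAt (hasGradientAt_bentParaboloid a c κ d γ y x e)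
    ((((hasFDerivAt_id w).sub_const y).const_smul (-a)).add
      ((((((hinner.add_const d).const_mul 2).add (hinner.const_mul (2 * γ))).smul_const e).sub
        (((hasFDerivAt_id w).sub_const x).const_smul (2 * γ))).const_smul κ)) fun v => ?_
  simp
  module

theorem IsElliptic.trace_mul_hessianMatrix_bentParaboloid_pos [NeZero n]
    {A : Matrix (Fin n) (Fin n) ℝ} (hA : IsElliptic n lam Lam A) (hlam : 0 < lam)
    (hLam : lam ≤ Lam) {a b d : ℝ} (ha : 0 ≤ a) (hd : 0 < d)
    (hb : 9 * n * Lam * (a * d) < lam * b) {e : EucSp n} (he : ‖e‖ = 1) (c : ℝ)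
    (y x w : EucSp n) :
    0 < (A * hessianMatrix n
      (bentParaboloid a c (b / (9 * d)) d (lam / (2 * n * Lam)) y x e) w).trace := by
  have hLam0 : 0 < Lam := hlam.trans_le hLam
  have hn : (0 : ℝ) < n := Nat.cast_pos.2 (NeZero.pos n)
  have hb0 : 0 < b := pos_of_mul_pos_right ((by positivity : (0 : ℝ) ≤ _).trans_lt hb) hlam.le
  rw [hessianMatrix_bentParaboloid]
  refine hA.trace_mul_pos (by positivity) (by positivity) ?_
  have hκ : a * (n * Lam) < b / (9 * d) * lam := by
    rw [div_mul_eq_mul_div, lt_div_iff₀ (by positivity)]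
    linarith
  have hκγ : 2 * (b / (9 * d)) * (lam / (2 * n * Lam)) * (n * Lam) = b / (9 * d) * lam := by
    field_simp
  have : 0 < 2 * (b / (9 * d)) * (lam / (2 * n * Lam)) * lam := by positivity
  rw [he]
  linarith

theorem IsPucciSupersolution.bentParaboloid_le [NeZero n]
    (hu : IsPucciSupersolution n lam Lam U u) (hlam : 0 < lam) (hLam : lam ≤ Lam)
    {a b c d S : ℝ} (ha : 0 ≤ a) (hd : 0 < d) (hS : 9 * (2 * n * Lam) ≤ lam * (S ^ 2 - 4))
    (hb : 9 * n * Lam * (a * d) < lam * b) {x y e : EucSp n} (he : ‖e‖ = 1)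
    (hball : closedBall x (S * d) ⊆ U)
    (hle : ∀ w ∈ closedBall x (S * d), c ≤ u w + a / 2 * ‖w - y‖ ^ 2)
    (hslope : ∀ w ∈ closedBall x (S * d), c + b * (⟪e, w - x⟫ - d) ≤ u w + a / 2 * ‖w - y‖ ^ 2) :
    ∀ w ∈ closedBall x (S * d) ∩ {w | ⟪e, w - x⟫ ∈ Icc (-d) (2 * d)},
      bentParaboloid a c (b / (9 * d)) d (lam / (2 * n * Lam)) y x e w ≤ u w := by
  have hLam0 : 0 < Lam := hlam.trans_le hLam
  have hn : (0 : ℝ) < n := Nat.cast_pos.2 (NeZero.pos n)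
  have hb0 : 0 < b := pos_of_mul_pos_right ((by positivity : (0 : ℝ) ≤ _).trans_lt hb) hlam.le
  set γ := lam / (2 * n * Lam) with hγ
  have hγ0 : 0 < γ := by positivity
  have hγS : 9 ≤ γ * (S ^ 2 - 4) := by
    rwa [hγ, div_mul_eq_mul_div, le_div_iff₀ (by positivity)]
  have hinner : Continuous fun w : EucSp n => ⟪e, w - x⟫ := by fun_prop
  refine hu.le_of_trace_pos (contDiff_bentParaboloid ..)
    (W := ball x (S * d) ∩ {w | ⟪e, w - x⟫ ∈ Ioo (-d) (2 * d)})
    ((isCompact_closedBall x (S * d)).inter_right (isClosed_Icc.preimage hinner))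
    (inter_subset_left.trans hball) (isOpen_ball.inter (isOpen_Ioo.preimage hinner))
    (inter_subset_inter ball_subset_closedBall fun w hw => Ioo_subset_Icc_self hw) ?_ ?_
  · rintro w ⟨⟨hwball, hwd, hwd'⟩, hwW⟩
    rw [bentParaboloid]
    rcases hwd'.eq_or_lt with htop | htop
    · have hbar : b / (9 * d) * slabBarrier d γ e (w - x) ≤ b / (9 * d) * (2 * d + d) ^ 2 := by
        gcongr
        exact htop ▸ slabBarrier_le hγ0.le he (w - x)
      have hbd : b / (9 * d) * (2 * d + d) ^ 2 = b * (2 * d - d) := by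
        field_simp
        ring
      have := hslope w hwball
      rw [htop] at this
      linarith
    · have hbar : slabBarrier d γ e (w - x) ≤ 0 := by
        rcases hwd.eq_or_lt with hbot | hbot
        · simpa [← hbot] using slabBarrier_le (d := d) hγ0.le he (w - x)
        · refine slabBarrier_nonpos hγ0.le hγS hwd hwd' ?_
          rw [← dist_eq_norm]
          exact le_antisymm hwball (not_lt.1 fun h => hwW ⟨h, hbot, htop⟩)
      have := mul_nonpos_of_nonneg_of_nonpos (by positivity : 0 ≤ b / (9 * d)) hbar
      linarith [hle w hwball]
  · exact fun w _ A hA =>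
      hA.trace_mul_hessianMatrix_bentParaboloid_pos hlam hLam ha hd hb he c y x w

theorem IsPucciSupersolution.slope_le [NeZero n]
    (hu : IsPucciSupersolution n lam Lam U u) (hlam : 0 < lam) (hLam : lam ≤ Lam)
    {a b d S : ℝ} (ha : 0 ≤ a) (hd : 0 < d) (hS₀ : 0 ≤ S)
    (hS : 9 * (2 * n * Lam) ≤ lam * (S ^ 2 - 4)) {x y e : EucSp n} (he : ‖e‖ = 1)
    (hball : closedBall x (S * d) ⊆ U)
    (hle : ∀ w ∈ closedBall x (S * d), u x + a / 2 * ‖x - y‖ ^ 2 ≤ u w + a / 2 * ‖w - y‖ ^ 2)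
    (hslope : ∀ w ∈ closedBall x (S * d),
      u x + a / 2 * ‖x - y‖ ^ 2 + b * (⟪e, w - x⟫ - d) ≤ u w + a / 2 * ‖w - y‖ ^ 2) :
    lam * b ≤ 9 * n * Lam * (a * d) := by
  by_contra! hb
  have hLam0 : 0 < Lam := hlam.trans_le hLam
  have hb0 : 0 < b := pos_of_mul_pos_right ((by positivity : (0 : ℝ) ≤ _).trans_lt hb) hlam.le
  have hx := hu.bentParaboloid_le hlam hLam ha hd hS hb he hball hle hslope x
    ⟨mem_closedBall_self (by positivity), by simp [hd.le]⟩
  have hκ : 0 < b / (9 * d) * d ^ 2 := by positivity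
  simp only [bentParaboloid, slabBarrier, sub_self, inner_zero_right, norm_zero] at hx
  linarith

/-- `x` is a point of `V` where the paraboloid `c - (a / 2) ‖· - y‖²`, slid upwards, first
touches the graph of `u` over `V`. -/
def IsContactPoint (a : ℝ) (V : Set (EucSp n)) (u : EucSp n → ℝ) (y x : EucSp n) : Prop :=
  x ∈ V ∧ IsMinOn (fun w => u w + a / 2 * ‖w - y‖ ^ 2) V x

theorem norm_sub_sq_sub_norm_sub_sq (w x y z : EucSp n) :
    ‖w - y‖ ^ 2 - ‖w - z‖ ^ 2 - (‖x - y‖ ^ 2 - ‖x - z‖ ^ 2) = 2 * ⟪z - y, w - x⟫ := by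
  simp only [norm_sub_sq_real, inner_sub_left, inner_sub_right, real_inner_comm]
  ring

theorem IsContactPoint.norm_vertex_sub_le [NeZero n] (hu : IsPucciSupersolution n lam Lam V u)
    (hlam : 0 < lam) (hLam : lam ≤ Lam) {a d S : ℝ} (ha : 0 < a) (hd : 0 < d) (hS₀ : 0 ≤ S)
    (hS : 9 * (2 * n * Lam) ≤ lam * (S ^ 2 - 4)) {x₀ x₁ y₀ y₁ : EucSp n}
    (h₀ : IsContactPoint a V u y₀ x₀) (h₁ : IsContactPoint a V u y₁ x₁) (hx : dist x₁ x₀ ≤ d)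
    (hball : closedBall x₀ (S * d) ⊆ V) : ‖y₁ - y₀‖ ≤ 9 * (n * Lam / lam) * d := by
  have hLam0 : 0 < Lam := hlam.trans_le hLam
  rcases eq_or_ne y₁ y₀ with rfl | hy
  · simp only [sub_self, norm_zero]
    positivity
  have hD : 0 < ‖y₁ - y₀‖ := norm_sub_pos_iff.2 hy
  set e := ‖y₁ - y₀‖⁻¹ • (y₁ - y₀)
  have he : ‖e‖ = 1 := norm_smul_inv_norm (𝕜 := ℝ) (sub_ne_zero.2 hy)
  have hinner (v : EucSp n) : ⟪y₁ - y₀, v⟫ = ‖y₁ - y₀‖ * ⟪e, v⟫ := by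
    rw [real_inner_smul_left, mul_inv_cancel_left₀ hD.ne']
  have hslope := hu.slope_le hlam hLam (b := a * ‖y₁ - y₀‖) (y := y₀) ha.le hd hS₀ hS he hball
    (fun w hw => h₀.2 (hball hw)) fun w hw => by
      have hxd : ⟪e, x₁ - x₀⟫ ≤ d := by
        refine (real_inner_le_norm _ _).trans ?_
        rwa [he, one_mul, ← dist_eq_norm]
      have hsub : ⟪e, w - x₁⟫ = ⟪e, w - x₀⟫ - ⟪e, x₁ - x₀⟫ := by
        rw [← inner_sub_right, sub_sub_sub_cancel_right]
      have hlin : a * ‖y₁ - y₀‖ * (⟪e, w - x₀⟫ - d) ≤ a * ‖y₁ - y₀‖ * ⟪e, w - x₁⟫ := by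
        gcongr
        linarith
      have hdiff := norm_sub_sq_sub_norm_sub_sq w x₁ y₀ y₁
      rw [hinner] at hdiff
      have hmin₀ : _ ≤ u x₁ + a / 2 * ‖x₁ - y₀‖ ^ 2 := h₀.2 h₁.1
      have hmin₁ : u x₁ + a / 2 * ‖x₁ - y₁‖ ^ 2 ≤ _ := h₁.2 (hball hw)
      linear_combination hmin₀ + hmin₁ + hlin - a / 2 * hdiff
  rw [← mul_le_mul_iff_right₀ (mul_pos hlam ha)]
  calc lam * a * ‖y₁ - y₀‖ = lam * (a * ‖y₁ - y₀‖) := by ring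
    _ ≤ 9 * n * Lam * (a * d) := hslope
    _ = lam * a * (9 * (n * Lam / lam) * d) := by field_simp

theorem IsContactPoint.norm_vertex_sub_le_mul_dist [NeZero n]
    (hu : IsPucciSupersolution n lam Lam V u) (hlam : 0 < lam) (hLam : lam ≤ Lam) {a r S : ℝ}
    (ha : 0 < a) (hS₀ : 0 ≤ S) (hS : 9 * (2 * n * Lam) ≤ lam * (S ^ 2 - 4))
    {x₀ x₁ y₀ y₁ : EucSp n} (h₀ : IsContactPoint a V u y₀ x₀) (h₁ : IsContactPoint a V u y₁ x₁)
    (hx : dist x₁ x₀ < r) (hball : closedBall x₀ (S * r) ⊆ V) :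
    ‖y₁ - y₀‖ ≤ 9 * (n * Lam / lam) * dist x₁ x₀ := by
  have htendsto : Filter.Tendsto (fun d => 9 * (n * Lam / lam) * d) (𝓝[>] dist x₁ x₀)
      (𝓝 (9 * (n * Lam / lam) * dist x₁ x₀)) :=
    (continuous_const_mul _).continuousWithinAt
  refine ge_of_tendsto htendsto ?_
  filter_upwards [Ioo_mem_nhdsGT hx] with d hd
  exact h₀.norm_vertex_sub_le hu hlam hLam ha (dist_nonneg.trans_lt hd.1) hS₀ hS h₁ hd.1.le
    ((closedBall_subset_closedBall (mul_le_mul_of_nonneg_left hd.2.le hS₀)).trans hball)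

/-! ### The point-to-measure estimate -/

theorem IsContactPoint.le_and_mem_ball {z y x x₁ : EucSp n} {s h : ℝ} (hs : 0 < s) (hh : 0 < h)
    (hx : IsContactPoint (32 * h / s ^ 2) V u y x) (hnonneg : ∀ w ∈ V, 0 ≤ u w)
    (hx₁V : x₁ ∈ V) (hx₁ : dist x₁ z ≤ s / 8) (hux₁ : u x₁ ≤ h) (hy : y ∈ ball z (s / 8)) :
    u x ≤ 2 * h ∧ x ∈ ball z (s / 2) := by
  have hmin : u x + 32 * h / s ^ 2 / 2 * ‖x - y‖ ^ 2 ≤ u x₁ + 32 * h / s ^ 2 / 2 * ‖x₁ - y‖ ^ 2 :=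
    hx.2 hx₁V
  have hx₁y : ‖x₁ - y‖ ≤ s / 4 := by
    rw [← dist_eq_norm]
    linarith [dist_triangle_right x₁ y z, mem_ball.1 hy]
  have hpar : 32 * h / s ^ 2 / 2 * ‖x₁ - y‖ ^ 2 ≤ h := by
    calc 32 * h / s ^ 2 / 2 * ‖x₁ - y‖ ^ 2 ≤ 32 * h / s ^ 2 / 2 * (s / 4) ^ 2 := by gcongr
      _ = h := by
        field_simp
        norm_num
  have hpar0 : 0 ≤ 32 * h / s ^ 2 / 2 * ‖x - y‖ ^ 2 := by positivity
  have hxy : ‖x - y‖ < 3 / 8 * s := by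
    by_contra! hlt
    have hfar : 32 * h / s ^ 2 / 2 * (3 / 8 * s) ^ 2 ≤ 32 * h / s ^ 2 / 2 * ‖x - y‖ ^ 2 := by
      gcongr
    have heq : 32 * h / s ^ 2 / 2 * (3 / 8 * s) ^ 2 = 9 / 4 * h := by
      field_simp
      norm_num
    linarith [hnonneg x hx.1]
  refine ⟨by linarith [hnonneg x hx.1], ?_⟩
  rw [← dist_eq_norm] at hxy
  rw [mem_ball]
  linarith [dist_triangle x y z, mem_ball.1 hy]

open Module in
/-- Change of variables for an inverse Lipschitz map, without differentiability. -/
theorem measure_le_of_dist_le_mul_dist_image {E : Type*} [NormedAddCommGroup E] [NormedSpace ℝ E]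
    [FiniteDimensional ℝ E] [MeasurableSpace E] [BorelSpace E] (μ : Measure E)
    [μ.IsAddHaarMeasure] {C : NNReal} {s : Set E} {g : E → E}
    (hg : ∀ x ∈ s, ∀ y ∈ s, dist x y ≤ C * dist (g x) (g y)) :
    μ s ≤ C ^ finrank ℝ E * μ (g '' s) := by
  have hanti : AntilipschitzWith C (s.domRestrict g) :=
    AntilipschitzWith.of_le_mul_dist fun x y => hg x x.2 y y.2
  have hle := hanti.le_hausdorffMeasure_image (d := finrank ℝ E) (by positivity) univ
  rw [image_univ, range_domRestrict, ← isometry_subtype_coe.hausdorffMeasure_image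
    (.inl (by positivity)), image_univ, Subtype.range_coe, ENNReal.rpow_natCast] at hle
  rw [Measure.isAddLeftInvariant_eq_smul μ (Measure.hausdorffMeasure (finrank ℝ E)),
    Measure.smul_apply, Measure.smul_apply, ENNReal.smul_def, ENNReal.smul_def, smul_eq_mul,
    smul_eq_mul, mul_left_comm]
  gcongr

theorem IsPucciSupersolution.volume_ball_le [NeZero n] {z x₁ : EucSp n} {S s h : ℝ}
    (hu : IsPucciSupersolution n lam Lam (closedBall z ((S + 1) * s)) u) (hlam : 0 < lam)
    (hLam : lam ≤ Lam) (hs : 0 < s) (hh : 0 < h) (hS₀ : 0 ≤ S)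
    (hS : 9 * (2 * n * Lam) ≤ lam * (S ^ 2 - 4))
    (hnonneg : ∀ x ∈ closedBall z ((S + 1) * s), 0 ≤ u x) (hx₁ : dist x₁ z ≤ s / 8)
    (hux₁ : u x₁ ≤ h) :
    volume (ball z (s / 8)) ≤
      ENNReal.ofReal (9 * (n * Lam / lam)) ^ n * volume (ball z s ∩ {x | u x ≤ 2 * h}) := by
  have hLam0 : 0 < Lam := hlam.trans_le hLam
  have hx₁V : x₁ ∈ closedBall z ((S + 1) * s) := by
    rw [mem_closedBall]
    nlinarith
  have hexists (y : EucSp n) :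
      ∃ x, IsContactPoint (32 * h / s ^ 2) (closedBall z ((S + 1) * s)) u y x :=
    (isCompact_closedBall z ((S + 1) * s)).exists_isMinOn ⟨x₁, hx₁V⟩
      (hu.continuousOn.add (by fun_prop))
  choose g hg using hexists
  have hgball (y : EucSp n) (hy : y ∈ ball z (s / 8)) : u (g y) ≤ 2 * h ∧ g y ∈ ball z (s / 2) :=
    (hg y).le_and_mem_ball hs hh hnonneg hx₁V hx₁ hux₁ hy
  have hexpand (y : EucSp n) (hy : y ∈ ball z (s / 8)) (y' : EucSp n) (hy' : y' ∈ ball z (s / 8)) :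
      dist y y' ≤ Real.toNNReal (9 * (n * Lam / lam)) * dist (g y) (g y') := by
    have hgy := mem_ball.1 (hgball y hy).2
    have hgy' := mem_ball.1 (hgball y' hy').2
    rw [Real.coe_toNNReal _ (by positivity), dist_eq_norm]
    refine (hg y').norm_vertex_sub_le_mul_dist hu hlam hLam (by positivity) hS₀ hS (hg y)
      (r := s) ?_ (closedBall_subset_closedBall' ?_)
    · linarith [dist_triangle_right (g y) (g y') z]
    · linarith
  refine (measure_le_of_dist_le_mul_dist_image volume hexpand).trans ?_
  rw [finrank_euclideanSpace_fin, ENNReal.ofReal]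
  gcongr
  rintro _ ⟨y, hy, rfl⟩
  exact ⟨ball_subset_ball (by linarith) (hgball y hy).2, (hgball y hy).1⟩

/-- At every scale in `U`, a nonnegative `u` that is at most `h` at one point near a ball is at
most `M h` on a proportion `1 / K` of that ball. Nonnegativity is required on a ball enlarged by the
factor `R`. -/
def PointToMeasureEstimate {E : Type*} [PseudoMetricSpace E] [MeasurableSpace E] (μ : Measure E)
    (R M K : ℝ) (U : Set E) (u : E → ℝ) : Prop :=
  ∀ ⦃z x : E⦄ ⦃s h : ℝ⦄, 0 < s → 0 < h → ball z (R * s) ⊆ U → (∀ y ∈ ball z (R * s), 0 ≤ u y) →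
    dist x z ≤ 5 * s → u x ≤ h → μ.real (ball z s) ≤ K * μ.real (ball z s ∩ {y | u y ≤ M * h})

theorem IsPucciSupersolution.volume_real_ball_le [NeZero n] {z x₁ : EucSp n} {S s h : ℝ}
    (hu : IsPucciSupersolution n lam Lam (closedBall z ((S + 1) * s)) u) (hlam : 0 < lam)
    (hLam : lam ≤ Lam) (hs : 0 < s) (hh : 0 < h) (hS₀ : 0 ≤ S)
    (hS : 9 * (2 * n * Lam) ≤ lam * (S ^ 2 - 4))
    (hnonneg : ∀ x ∈ closedBall z ((S + 1) * s), 0 ≤ u x) (hx₁ : dist x₁ z ≤ s / 8)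
    (hux₁ : u x₁ ≤ h) :
    volume.real (ball z s) ≤
      8 ^ n * (9 * (n * Lam / lam)) ^ n * volume.real (ball z s ∩ {x | u x ≤ 2 * h}) := by
  have hLam0 : 0 < Lam := hlam.trans_le hLam
  have hle := hu.volume_ball_le hlam hLam hs hh hS₀ hS hnonneg hx₁ hux₁
  have hfin : volume (ball z s ∩ {x | u x ≤ 2 * h}) ≠ ⊤ :=
    measure_ne_top_of_subset inter_subset_left measure_ball_lt_top.ne
  have hball : volume (ball z s) = ENNReal.ofReal 8 ^ n * volume (ball z (s / 8)) := by
    conv_lhs => rw [show s = 8 * (s / 8) by ring]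
    rw [Measure.addHaar_ball_mul _ _ (by norm_num), ← Measure.addHaar_ball_center _ z,
      finrank_euclideanSpace_fin, ENNReal.ofReal_pow (by norm_num)]
  have hle' : volume (ball z s) ≤ ENNReal.ofReal (8 ^ n * (9 * (n * Lam / lam)) ^ n) *
      volume (ball z s ∩ {x | u x ≤ 2 * h}) := by
    rw [hball, ENNReal.ofReal_mul (by positivity), ENNReal.ofReal_pow (by positivity),
      ENNReal.ofReal_pow (by positivity), mul_assoc]
    gcongr
  rw [measureReal_def, measureReal_def]
  refine (ENNReal.toReal_mono (ENNReal.mul_ne_top ENNReal.ofReal_ne_top hfin) hle').trans_eq ?_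
  rw [ENNReal.toReal_mul, ENNReal.toReal_ofReal (by positivity)]

theorem exists_mem_closedBall_le_mul (n : ℕ) (hlam : 0 < lam) (hLam : lam ≤ Lam) :
    ∃ m ≥ (1 : ℝ), ∀ (u : EucSp n → ℝ) (z x : EucSp n) (s h : ℝ), 0 < s → 0 < h →
      IsPucciSupersolution n lam Lam (ball z (6 * s)) u → (∀ y ∈ ball z (6 * s), 0 ≤ u y) →
      dist x z ≤ 5 * s → u x ≤ h → ∃ x₁ ∈ closedBall z (s / 8), u x₁ ≤ m * h := by
  obtain ⟨η, hη, hopf⟩ := exists_hopf_constant n hlam hLam (κ := 1 / 48) (by norm_num)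
  refine ⟨7 / η + 1, le_add_of_nonneg_left (by positivity),
    fun u z x s h hs hh hu hnonneg hx hux => ?_⟩
  by_contra! hlarge
  have hlower := hopf u z (6 * s) ((7 / η + 1) * h) hu hnonneg
    (fun y hy => (hlarge y (by convert hy using 2; ring)).le) x (mem_ball.2 (by linarith))
  have hdist : 1 / 6 ≤ 1 - dist x z / (6 * s) := by
    rw [le_sub_comm, div_le_iff₀ (by positivity)]
    linarith
  have : h < η * ((7 / η + 1) * h) * (1 - dist x z / (6 * s)) := by
    calc h < 7 / 6 * h := by linarith
      _ ≤ (7 + η) * h * (1 / 6) := by nlinarith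
      _ ≤ (7 + η) * h * (1 - dist x z / (6 * s)) := by gcongr
      _ = _ := by field_simp
  linarith

theorem exists_pointToMeasureEstimate (n : ℕ) [NeZero n] (hlam : 0 < lam) (hLam : lam ≤ Lam) :
    ∃ R M K : ℝ, 6 ≤ R ∧ 1 < M ∧ 1 ≤ K ∧ ∀ (U : Set (EucSp n)) (u : EucSp n → ℝ),
      IsPucciSupersolution n lam Lam U u → PointToMeasureEstimate volume R M K U u := by
  have hLam0 : 0 < Lam := hlam.trans_le hLam
  obtain ⟨m, hm, hpoint⟩ := exists_mem_closedBall_le_mul n hlam hLam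
  set q := n * Lam / lam with hq
  have hq0 : 0 ≤ q := by positivity
  have hS : 9 * (2 * n * Lam) ≤ lam * ((18 * q + 2) ^ 2 - 4) := by
    have hnLam : n * Lam = lam * q := by
      rw [hq]
      field_simp
    calc 9 * (2 * n * Lam) = lam * (18 * q) := by linear_combination 18 * hnLam
      _ ≤ lam * ((18 * q + 2) ^ 2 - 4) := by
        gcongr
        nlinarith
  refine ⟨18 * q + 6, 2 * m, 8 ^ n * (9 * q) ^ n + 1, by linarith, by linarith,
    le_add_of_nonneg_left (by positivity), fun U u hu z x s h hs hh hU hnonneg hx hux => ?_⟩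
  have hball : ball z (6 * s) ⊆ ball z ((18 * q + 6) * s) := ball_subset_ball (by nlinarith)
  have hclosed : closedBall z ((18 * q + 2 + 1) * s) ⊆ ball z ((18 * q + 6) * s) :=
    closedBall_subset_ball (by nlinarith)
  obtain ⟨x₁, hx₁, hux₁⟩ := hpoint u z x s h hs hh (hu.mono (hball.trans hU))
    (fun y hy => hnonneg y (hball hy)) hx hux
  have hle := (hu.mono (hclosed.trans hU)).volume_real_ball_le hlam hLam hs
    (by positivity) (by positivity) hS (fun y hy => hnonneg y (hclosed hy)) hx₁ hux₁
  rw [mul_assoc 2]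
  exact hle.trans (mul_le_mul_of_nonneg_right (le_add_of_nonneg_right zero_le_one)
    measureReal_nonneg)

end

/-! ### Decay of superlevel sets -/

theorem measure_le_mul_of_forall_exists_subset_closedBall {α : Type*} [PseudoMetricSpace α]
    [SecondCountableTopology α] [MeasurableSpace α] {μ : Measure α} {F T : Set α} {r : ℝ}
    {C : ℝ≥0∞}
    (h : ∀ x ∈ F, ∃ (ρ : ℝ) (b : Set α), 0 < ρ ∧ ρ ≤ r ∧ MeasurableSet b ∧ b ⊆ T ∧
      b ⊆ closedBall x ρ ∧ μ (closedBall x (5 * ρ)) ≤ C * μ b) :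
    μ F ≤ C * μ T := by
  choose! ρ b hρ hρr hmeas hbT hbρ hle using h
  obtain ⟨t, htF, hdisj, hcov⟩ := Vitali.exists_disjoint_subfamily_covering_enlargement_closedBall
    F (fun x => x) ρ r hρr 5 (by norm_num)
  have hcount : t.Countable := hdisj.countable_of_nonempty_interior fun x hx =>
    ⟨x, ball_subset_interior_closedBall (mem_ball_self (hρ x (htF hx)))⟩
  have hF : F ⊆ ⋃ x ∈ t, closedBall x (5 * ρ x) := by
    intro x hx
    obtain ⟨y, hy, hxy⟩ := hcov x hx
    exact mem_iUnion₂.2 ⟨y, hy, hxy (mem_closedBall_self (hρ x hx).le)⟩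
  calc μ F ≤ μ (⋃ x ∈ t, closedBall x (5 * ρ x)) := measure_mono hF
    _ ≤ ∑' x : t, μ (closedBall (x : α) (5 * ρ x)) := measure_biUnion_le _ hcount _
    _ ≤ ∑' x : t, C * μ (b x) := ENNReal.tsum_le_tsum fun x => hle x (htF x.2)
    _ = C * μ (⋃ x ∈ t, b x) := by
      rw [ENNReal.tsum_mul_left, measure_biUnion hcount _ fun x hx => hmeas x (htF hx)]
      exact fun x hx y hy hxy => (hdisj hx hy hxy).mono (hbρ x (htF hx)) (hbρ y (htF hy))
    _ ≤ C * μ T := by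
      gcongr
      exact iUnion₂_subset fun x hx => hbT x (htF hx)

theorem exists_ball_lt_of_lt {E : Type*} [NormedAddCommGroup E] [NormedSpace ℝ E] [ProperSpace E]
    {u : E → ℝ} {x₀ x : E} {r H : ℝ} (hc : ContinuousOn u (closedBall x₀ (2 * r)))
    (hx₀ : u x₀ ≤ H) (hx : x ∈ ball x₀ r) (hux : H < u x) :
    ∃ (z w : E) (s : ℝ), 0 < s ∧ dist x z ≤ s ∧ dist z x₀ + s < r ∧ dist w z ≤ 5 * s ∧
      u w ≤ H ∧ ∀ y ∈ ball z s, H < u y := by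
  rw [mem_ball] at hx
  have hr : 0 < r := dist_nonneg.trans_lt hx
  set G := closedBall x₀ (2 * r) ∩ u ⁻¹' Iic H
  have hG : IsCompact G := (isCompact_closedBall x₀ (2 * r)).of_isClosed_subset
    (hc.preimage_isClosed_of_isClosed isClosed_closedBall isClosed_Iic) inter_subset_left
  have hx₀G : x₀ ∈ G := ⟨mem_closedBall_self (by positivity), hx₀⟩
  obtain ⟨w, hwG, hw⟩ := hG.exists_infDist_eq_dist ⟨x₀, hx₀G⟩ x
  have hwx₀ : dist x w ≤ dist x x₀ := hw ▸ infDist_le_dist_of_mem hx₀G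
  have hxw : 0 < dist x w := by
    refine dist_pos.2 ?_
    rintro rfl
    exact hux.not_ge hwG.2
  obtain ⟨z, hxz, hzx₀⟩ : ∃ z, dist x z ≤ dist x w / 4 ∧ dist z x₀ ≤ dist x x₀ - dist x w / 4 :=
    exists_dist_le_le (by positivity) (by linarith) (by linarith)
  refine ⟨z, w, dist x w / 4, by positivity, hxz, by linarith, ?_, hwG.2, fun y hy => ?_⟩
  · linarith [dist_triangle_left w z x]
  · rw [mem_ball] at hy
    by_contra! hyH
    have hyG : y ∈ G := ⟨by rw [mem_closedBall]; linarith [dist_triangle y z x₀], hyH⟩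
    have := infDist_le_dist_of_mem (x := x) hyG
    linarith [dist_triangle x z y, dist_comm y z]

section Haar

open Module

variable {E : Type*} [NormedAddCommGroup E] [NormedSpace ℝ E] [FiniteDimensional ℝ E]
  [MeasurableSpace E] [BorelSpace E] {μ : Measure E} [μ.IsAddHaarMeasure] {R M K θ : ℝ} {U : Set E}
  {u : E → ℝ}

theorem measure_closedBall_le_of_measureReal_ball_le {x z : E} {s C : ℝ} {b : Set E}
    (hC : 0 ≤ C) (hs : 0 < s) (hK : 0 ≤ K) (hb : b ⊆ ball z s)
    (h : μ.real (ball z s) ≤ K * μ.real b) :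
    μ (closedBall x (C * s)) ≤ ENNReal.ofReal (C ^ finrank ℝ E * K) * μ b := by
  have hbfin : μ b ≠ ⊤ := measure_ne_top_of_subset hb measure_ball_lt_top.ne
  have hball : μ (ball z s) ≤ ENNReal.ofReal K * μ b := by
    rw [← ofReal_measureReal measure_ball_lt_top.ne, ← ofReal_measureReal hbfin,
      ← ENNReal.ofReal_mul hK]
    exact ENNReal.ofReal_le_ofReal h
  calc μ (closedBall x (C * s)) = ENNReal.ofReal (C ^ finrank ℝ E) * μ (ball z s) := by
        rw [Measure.addHaar_closedBall μ x (by positivity), Measure.addHaar_ball_of_pos μ z hs,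
          mul_pow, ENNReal.ofReal_mul (by positivity), mul_assoc]
    _ ≤ ENNReal.ofReal (C ^ finrank ℝ E) * (ENNReal.ofReal K * μ b) := by gcongr
    _ = _ := by rw [ENNReal.ofReal_mul (by positivity), mul_assoc]

theorem PointToMeasureEstimate.measureReal_le_mul_diff
    (h : PointToMeasureEstimate μ R M K U u) (hu : ContinuousOn u U) (hR : 6 ≤ R) (hK : 0 ≤ K)
    {x₀ : E} {r H : ℝ} (hr : 0 < r) (hH : 0 < H) (hU : ball x₀ (R * r) ⊆ U)
    (hnonneg : ∀ x ∈ ball x₀ (R * r), 0 ≤ u x) (hx₀ : u x₀ ≤ H) :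
    μ.real (ball x₀ r ∩ {x | H < u x}) ≤ 10 ^ finrank ℝ E * K *
      μ.real ((ball x₀ r ∩ {x | H < u x}) \ (ball x₀ r ∩ {x | M * H < u x})) := by
  set F := ball x₀ r ∩ {x | H < u x}
  set F' := ball x₀ r ∩ {x | M * H < u x}
  have hF' : MeasurableSet F' :=
    ((hu.mono ((ball_subset_ball (by nlinarith)).trans hU)).isOpen_inter_preimage isOpen_ball
      isOpen_Ioi).measurableSet
  have hcov : μ F ≤ ENNReal.ofReal (10 ^ finrank ℝ E * K) * μ (F \ F') := by
    refine measure_le_mul_of_forall_exists_subset_closedBall (r := 2 * r) fun x hx => ?_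
    obtain ⟨z, w, s, hs, hxz, hzx₀, hwz, hwH, hball⟩ := exists_ball_lt_of_lt
      (hu.mono ((closedBall_subset_ball (by nlinarith)).trans hU)) hx₀ hx.1 hx.2
    have hzx₀' : 0 ≤ dist z x₀ := dist_nonneg
    have hzr : ball z s ⊆ ball x₀ r := ball_subset_ball' (by linarith)
    have hzR : ball z (R * s) ⊆ ball x₀ (R * r) := ball_subset_ball' (by nlinarith)
    have hzF : ball z s ∩ {y | u y ≤ M * H} ⊆ ball z s \ F' :=
      fun y ⟨hy, (hle : u y ≤ M * H)⟩ => ⟨hy, fun ⟨_, (hlt : M * H < u y)⟩ => hlt.not_ge hle⟩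
    have hest : μ.real (ball z s) ≤ K * μ.real (ball z s \ F') :=
      (h hs hH (hzR.trans hU) (fun y hy => hnonneg y (hzR hy)) hwz hwH).trans <|
        mul_le_mul_of_nonneg_left (measureReal_mono hzF
          (measure_ne_top_of_subset sdiff_subset measure_ball_lt_top.ne)) hK
    refine ⟨2 * s, ball z s \ F', by positivity, by linarith, measurableSet_ball.diff hF',
      sdiff_subset_sdiff_left fun y hy => ⟨hzr hy, hball y hy⟩,
      sdiff_subset.trans (ball_subset_closedBall.trans (closedBall_subset_closedBall' ?_)), ?_⟩
    · linarith [dist_comm x z]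
    · rw [show 5 * (2 * s) = 10 * s by ring]
      exact measure_closedBall_le_of_measureReal_ball_le (by norm_num) hs hK sdiff_subset hest
  have hfin : μ (F \ F') ≠ ⊤ := measure_ne_top_of_subset
    (sdiff_subset.trans inter_subset_left) measure_ball_lt_top.ne
  have := ENNReal.toReal_mono (ENNReal.mul_ne_top ENNReal.ofReal_ne_top hfin) hcov
  rwa [ENNReal.toReal_mul, ENNReal.toReal_ofReal (by positivity)] at this

theorem PointToMeasureEstimate.measureReal_le_mul
    (h : PointToMeasureEstimate μ R M K U u) (hu : ContinuousOn u U) (hR : 6 ≤ R) (hM : 1 ≤ M)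
    (hK : 0 < K) {x₀ : E} {r H : ℝ} (hr : 0 < r) (hH : 0 < H) (hU : ball x₀ (R * r) ⊆ U)
    (hnonneg : ∀ x ∈ ball x₀ (R * r), 0 ≤ u x) (hx₀ : u x₀ ≤ H) :
    μ.real (ball x₀ r ∩ {x | M * H < u x}) ≤
      (1 - (10 ^ finrank ℝ E * K)⁻¹) * μ.real (ball x₀ r ∩ {x | H < u x}) := by
  have hle := h.measureReal_le_mul_diff hu hR hK.le hr hH hU hnonneg hx₀
  have hF' : MeasurableSet (ball x₀ r ∩ {x | M * H < u x}) :=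
    ((hu.mono ((ball_subset_ball (by nlinarith)).trans hU)).isOpen_inter_preimage isOpen_ball
      isOpen_Ioi).measurableSet
  have hsub : ball x₀ r ∩ {x | M * H < u x} ⊆ ball x₀ r ∩ {x | H < u x} := fun x hx =>
    ⟨hx.1, (le_mul_of_one_le_left hH.le hM).trans_lt hx.2⟩
  rw [measureReal_sdiff hsub hF'
    (measure_ne_top_of_subset inter_subset_left measure_ball_lt_top.ne),
    ← inv_mul_le_iff₀ (by positivity)] at hle
  linarith

/-- At every scale in `U`, the proportion of a ball on which a nonnegative `u` exceeds `M ^ k` times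
a bound for its value at the centre is at most `θ ^ k`. Nonnegativity is required on a ball enlarged
by the factor `R`. -/
def SuperlevelDecay {E : Type*} [PseudoMetricSpace E] [MeasurableSpace E] (μ : Measure E)
    (R M θ : ℝ) (U : Set E) (u : E → ℝ) : Prop :=
  ∀ ⦃z : E⦄ ⦃s h : ℝ⦄, 0 < s → 0 < h → ball z (R * s) ⊆ U → (∀ y ∈ ball z (R * s), 0 ≤ u y) →
    u z ≤ h → ∀ k : ℕ, μ.real (ball z s ∩ {y | M ^ k * h < u y}) ≤ θ ^ k * μ.real (ball z s)

theorem PointToMeasureEstimate.superlevelDecay (h : PointToMeasureEstimate μ R M K U u)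
    (hu : ContinuousOn u U) (hR : 6 ≤ R) (hM : 1 ≤ M) (hK : 1 ≤ K) :
    SuperlevelDecay μ R M (1 - (10 ^ finrank ℝ E * K)⁻¹) U u := by
  intro z s H hs hH hU hnonneg hz k
  have hθ : (10 ^ finrank ℝ E * K)⁻¹ ≤ 1 :=
    inv_le_one_of_one_le₀ (one_le_mul_of_one_le_of_one_le (one_le_pow₀ (by norm_num)) hK)
  induction k with
  | zero =>
    simpa only [pow_zero, one_mul] using
      measureReal_mono inter_subset_left measure_ball_lt_top.ne
  | succ k ih =>
    have hHk : H ≤ M ^ k * H := le_mul_of_one_le_left hH.le (one_le_pow₀ hM)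
    rw [pow_succ', mul_assoc, pow_succ', mul_assoc]
    exact (h.measureReal_le_mul hu hR hM (by linarith) hs (hH.trans_le hHk) hU hnonneg
      (hz.trans hHk)).trans (mul_le_mul_of_nonneg_left ih (sub_nonneg.2 hθ))

end Haar

/-! ### The Harnack inequality -/

theorem le_mul_of_isMaxOn_mul_pow {X : Type*} [PseudoMetricSpace X] {u : X → ℝ} {x₀ x₁ : X}
    {r τ q : ℝ} {β : ℕ}
    (hmax : IsMaxOn (fun x => u x * (r - dist x x₀) ^ β) (closedBall x₀ r) x₁)
    (hx₁ : dist x₁ x₀ < r) (hτ : τ < 1) (hq₀ : 0 ≤ q) (hq : 1 ≤ q * (1 - τ) ^ β)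
    {y : X} (hy : y ∈ ball x₁ (τ * (r - dist x₁ x₀))) (huy : 0 ≤ u y) :
    u y ≤ q * u x₁ := by
  rw [mem_ball] at hy
  have hd : 0 < r - dist x₁ x₀ := by linarith
  have hdist : (1 - τ) * (r - dist x₁ x₀) ≤ r - dist y x₀ := by
    linarith [dist_triangle y x₁ x₀]
  have hpos : 0 < (1 - τ) * (r - dist x₁ x₀) := mul_pos (by linarith) hd
  have hyr : y ∈ closedBall x₀ r := by
    rw [mem_closedBall]
    linarith
  have hle : u y * (1 - τ) ^ β ≤ u x₁ := by
    refine le_of_mul_le_mul_right ?_ (pow_pos hd β)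
    calc u y * (1 - τ) ^ β * (r - dist x₁ x₀) ^ β
        = u y * ((1 - τ) * (r - dist x₁ x₀)) ^ β := by rw [mul_pow, mul_assoc]
      _ ≤ u y * (r - dist y x₀) ^ β := by gcongr
      _ ≤ u x₁ * (r - dist x₁ x₀) ^ β := hmax hyr
  calc u y ≤ u y * (q * (1 - τ) ^ β) := le_mul_of_one_le_right huy hq
    _ = q * (u y * (1 - τ) ^ β) := by ring
    _ ≤ q * u x₁ := by gcongr

/- If `u` is large at `x₁` and not much larger nearby, then it is large on at least half of a ball
around `x₁`, by the decay for `c - u`; the decay for `u` bounds the measure of that half. -/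
theorem SuperlevelDecay.measureReal_ball_le {X : Type*} [PseudoMetricSpace X] [ProperSpace X]
    [MeasurableSpace X] {μ : Measure X} [IsFiniteMeasureOnCompacts μ] {R M θ : ℝ} {U : Set X}
    {u : X → ℝ} {x₀ x₁ : X} {r s h : ℝ} {k m : ℕ} (hdecay : SuperlevelDecay μ R M θ U u)
    (hdecay_sub : SuperlevelDecay μ R M θ U fun x => (1 + 1 / (2 * M ^ m)) * u x₁ - u x)
    (hM : 0 < M) (hθ : θ ^ m ≤ 1 / 2) (hr : 0 < r) (hs : 0 < s) (hh : 0 < h)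
    (hU : ball x₀ (R * r) ⊆ U) (hnonneg : ∀ x ∈ ball x₀ (R * r), 0 ≤ u x) (hux₀ : u x₀ ≤ h)
    (hs₁ : ball x₁ s ⊆ ball x₀ r) (hRs : ball x₁ (R * s) ⊆ ball x₀ (R * r))
    (hle : ∀ y ∈ ball x₁ (R * s), u y ≤ (1 + 1 / (2 * M ^ m)) * u x₁)
    (hux₁ : 2 * (M ^ k * h) ≤ u x₁) :
    μ.real (ball x₁ s) ≤ 2 * θ ^ k * μ.real (ball x₀ r) := by
  have hux₁_pos : 0 < u x₁ := lt_of_lt_of_le (by positivity) hux₁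
  have hlow := hdecay_sub hs (h := 1 / (2 * M ^ m) * u x₁) (by positivity) (hRs.trans hU)
    (fun y hy => sub_nonneg.2 (hle y hy)) (by linarith) m
  have hhigh := hdecay hr hh hU hnonneg hux₀ k
  rw [show M ^ m * (1 / (2 * M ^ m) * u x₁) = u x₁ / 2 by field_simp] at hlow
  have hcover : ball x₁ s ⊆
      (ball x₁ s ∩ {y | u x₁ / 2 < (1 + 1 / (2 * M ^ m)) * u x₁ - u y}) ∪
        (ball x₀ r ∩ {y | M ^ k * h < u y}) := by
    intro y hy
    rcases lt_or_ge (M ^ k * h) (u y) with hlt | hge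
    · exact .inr ⟨hs₁ hy, hlt⟩
    · have hpos : 0 < 1 / (2 * M ^ m) * u x₁ := by positivity
      have hlt : u x₁ / 2 < (1 + 1 / (2 * M ^ m)) * u x₁ - u y := by linarith
      exact .inl ⟨hy, hlt⟩
  have hfin : ball x₁ s ∩ {y | u x₁ / 2 < (1 + 1 / (2 * M ^ m)) * u x₁ - u y} ∪
      ball x₀ r ∩ {y | M ^ k * h < u y} ⊆ ball x₁ s ∪ ball x₀ r :=
    union_subset_union inter_subset_left inter_subset_left
  have hsplit := (measureReal_mono (μ := μ) hcover (measure_ne_top_of_subset hfin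
    (measure_union_lt_top measure_ball_lt_top measure_ball_lt_top).ne)).trans
    (measureReal_union_le _ _)
  have hhalf : θ ^ m * μ.real (ball x₁ s) ≤ 1 / 2 * μ.real (ball x₁ s) := by gcongr
  linarith

theorem exists_one_lt_mul_one_sub_pow {q : ℝ} (hq : 1 < q) (β : ℕ) :
    ∃ τ ∈ Ioo (0 : ℝ) 1, 1 < q * (1 - τ) ^ β := by
  have hcont : Continuous fun τ : ℝ => q * (1 - τ) ^ β := by fun_prop
  have hnear : ∀ᶠ τ in 𝓝[>] (0 : ℝ), 1 < q * (1 - τ) ^ β :=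
    nhdsWithin_le_nhds (hcont.continuousAt.eventually_const_lt (by simpa using hq))
  obtain ⟨τ, hτ, hτ'⟩ := (hnear.and (Ioo_mem_nhdsGT one_pos)).exists
  exact ⟨τ, hτ', hτ⟩

theorem pow_mul_pow_le_of_pow_le {M θ d r K : ℝ} {N j k : ℕ} (hM : 0 ≤ M) (hd : 0 ≤ d)
    (hθ : 0 ≤ θ) (hr : 0 ≤ r) (hK : 0 ≤ K) (hMθ : M * θ ^ j ≤ 1) (h : d ^ N ≤ K * θ ^ k * r ^ N) :
    M ^ k * d ^ (N * j) ≤ K ^ j * r ^ (N * j) := by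
  calc M ^ k * d ^ (N * j) = M ^ k * (d ^ N) ^ j := by rw [pow_mul]
    _ ≤ M ^ k * (K * θ ^ k * r ^ N) ^ j := by gcongr
    _ = (M * θ ^ j) ^ k * (K ^ j * r ^ (N * j)) := by ring
    _ ≤ K ^ j * r ^ (N * j) :=
      mul_le_of_le_one_left (by positivity) (pow_le_one₀ (by positivity) hMθ)

section Haar

open Module

variable {E : Type*} [NormedAddCommGroup E] [NormedSpace ℝ E] [FiniteDimensional ℝ E]
  [Nontrivial E] [MeasurableSpace E] [BorelSpace E] {μ : Measure E} [μ.IsAddHaarMeasure]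
  {R M θ : ℝ} {U : Set E} {u : E → ℝ}

theorem pow_le_mul_of_measureReal_ball_le {x₀ x₁ : E} {r d τ C : ℝ} (hr : 0 ≤ r) (hd : 0 ≤ d)
    (hτ : 0 < τ) (h : μ.real (ball x₁ (τ * d)) ≤ C * μ.real (ball x₀ r)) :
    d ^ finrank ℝ E ≤ τ⁻¹ ^ finrank ℝ E * C * r ^ finrank ℝ E := by
  rw [← Measure.addHaar_real_closedBall_eq_addHaar_real_ball,
    ← Measure.addHaar_real_closedBall_eq_addHaar_real_ball,
    Measure.addHaar_real_closedBall μ x₁ (by positivity), Measure.addHaar_real_closedBall μ x₀ hr,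
    ← mul_assoc] at h
  have hball : 0 < μ.real (ball (0 : E) 1) :=
    ENNReal.toReal_pos (measure_ball_pos μ _ one_pos).ne' measure_ball_lt_top.ne
  have hle := le_of_mul_le_mul_right h hball
  calc d ^ finrank ℝ E = τ⁻¹ ^ finrank ℝ E * (τ * d) ^ finrank ℝ E := by
        rw [← mul_pow, inv_mul_cancel_left₀ hτ.ne']
    _ ≤ τ⁻¹ ^ finrank ℝ E * (C * r ^ finrank ℝ E) := by gcongr
    _ = _ := by rw [mul_assoc]

theorem SuperlevelDecay.pow_mul_pow_le_of_isMaxOn {x₀ x₁ : E} {r h τ : ℝ} {j k m : ℕ}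
    (hdecay : SuperlevelDecay μ R M θ U u)
    (hdecay_sub : ∀ c, SuperlevelDecay μ R M θ U fun x => c - u x)
    (hR : 1 < R) (hM : 1 < M) (hθ : 0 ≤ θ) (hθm : θ ^ m ≤ 1 / 2) (hMθ : M * θ ^ j ≤ 1)
    (hτ₀ : 0 < τ) (hτ₁ : τ < 1)
    (hτ : 1 ≤ (1 + 1 / (2 * M ^ m)) * (1 - τ) ^ (finrank ℝ E * j)) (hr : 0 < r) (hh : 0 < h)
    (hU : ball x₀ (R * r) ⊆ U) (hnonneg : ∀ x ∈ ball x₀ (R * r), 0 ≤ u x) (hux₀ : u x₀ ≤ h)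
    (hx₁ : dist x₁ x₀ < r)
    (hmax : IsMaxOn (fun x => u x * (r - dist x x₀) ^ (finrank ℝ E * j)) (closedBall x₀ r) x₁)
    (hux₁ : 2 * (M ^ k * h) ≤ u x₁) :
    M ^ k * (r - dist x₁ x₀) ^ (finrank ℝ E * j) ≤
      ((R / τ) ^ finrank ℝ E * 2) ^ j * r ^ (finrank ℝ E * j) := by
  set d := r - dist x₁ x₀
  have hd : 0 < d := by linarith
  have hM₀ : 0 < M := by linarith
  have hRd : R * (τ / R * d) = τ * d := by field_simp
  have hτd : τ * d ≤ d := mul_le_of_le_one_left hd.le hτ₁.le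
  have hτRd : τ / R * d ≤ d :=
    mul_le_of_le_one_left hd.le ((div_le_one₀ (by linarith)).2 (by linarith))
  have hsub : ball x₁ (τ * d) ⊆ ball x₀ (R * r) := ball_subset_ball' (by nlinarith)
  refine pow_mul_pow_le_of_pow_le hM₀.le hd.le hθ hr.le (by positivity) hMθ ?_
  rw [mul_assoc _ (2 : ℝ), ← inv_div τ R]
  refine pow_le_mul_of_measureReal_ball_le (μ := μ) hr.le hd.le (by positivity)
    (hdecay.measureReal_ball_le (hdecay_sub _) hM₀ hθm hr (by positivity) hh hU hnonneg hux₀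
      (ball_subset_ball' (by linarith)) (hRd ▸ hsub) (fun y hy => ?_) hux₁)
  rw [hRd] at hy
  exact le_mul_of_isMaxOn_mul_pow hmax hx₁ hτ₁ (by positivity) hτ hy (hnonneg y (hsub hy))

theorem SuperlevelDecay.mul_pow_le_of_isMaxOn {x₀ x₁ : E} {r h τ : ℝ} {j m : ℕ}
    (hdecay : SuperlevelDecay μ R M θ U u)
    (hdecay_sub : ∀ c, SuperlevelDecay μ R M θ U fun x => c - u x)
    (hR : 1 < R) (hM : 1 < M) (hθ : 0 ≤ θ) (hθm : θ ^ m ≤ 1 / 2) (hMθ : M * θ ^ j ≤ 1)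
    (hτ₀ : 0 < τ) (hτ₁ : τ < 1)
    (hτ : 1 ≤ (1 + 1 / (2 * M ^ m)) * (1 - τ) ^ (finrank ℝ E * j)) (hr : 0 < r) (hh : 0 < h)
    (hU : ball x₀ (R * r) ⊆ U) (hnonneg : ∀ x ∈ ball x₀ (R * r), 0 ≤ u x) (hux₀ : u x₀ ≤ h)
    (hx₁ : dist x₁ x₀ ≤ r)
    (hmax : IsMaxOn (fun x => u x * (r - dist x x₀) ^ (finrank ℝ E * j)) (closedBall x₀ r) x₁) :
    u x₁ * (r - dist x₁ x₀) ^ (finrank ℝ E * j) ≤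
      2 * M * ((R / τ) ^ finrank ℝ E * 2) ^ j * h * r ^ (finrank ℝ E * j) := by
  rcases hx₁.eq_or_lt with heq | hlt
  · have hj : j ≠ 0 := by
      rintro rfl
      linarith [pow_zero θ]
    rw [heq, sub_self, zero_pow (mul_ne_zero finrank_pos.ne' hj), mul_zero]
    positivity
  rcases lt_or_ge (u x₁) (2 * h) with hsmall | hlarge
  · have hRτ : 1 ≤ (R / τ) ^ finrank ℝ E :=
      one_le_pow₀ ((one_le_div₀ hτ₀).2 (by linarith))
    have hC : 1 ≤ M * ((R / τ) ^ finrank ℝ E * 2) ^ j :=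
      one_le_mul_of_one_le_of_one_le hM.le (one_le_pow₀ (by linarith))
    calc u x₁ * (r - dist x₁ x₀) ^ (finrank ℝ E * j) ≤ 2 * h * r ^ (finrank ℝ E * j) := by
          gcongr
          linarith [dist_nonneg (x := x₁) (y := x₀)]
      _ ≤ M * ((R / τ) ^ finrank ℝ E * 2) ^ j * (2 * h * r ^ (finrank ℝ E * j)) :=
        le_mul_of_one_le_left (by positivity) hC
      _ = _ := by ring
  · obtain ⟨k, hk, hk'⟩ := exists_nat_pow_near ((one_le_div₀ (by positivity)).2 hlarge) hM
    rw [le_div_iff₀ (by positivity)] at hk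
    rw [div_lt_iff₀ (by positivity)] at hk'
    have hpow := hdecay.pow_mul_pow_le_of_isMaxOn hdecay_sub hR hM hθ hθm hMθ hτ₀ hτ₁ hτ hr hh hU
      hnonneg hux₀ hlt hmax (k := k) (by linarith)
    calc u x₁ * (r - dist x₁ x₀) ^ (finrank ℝ E * j)
        ≤ M ^ (k + 1) * (2 * h) * (r - dist x₁ x₀) ^ (finrank ℝ E * j) := by gcongr
      _ = 2 * M * h * (M ^ k * (r - dist x₁ x₀) ^ (finrank ℝ E * j)) := by ring
      _ ≤ 2 * M * h * (((R / τ) ^ finrank ℝ E * 2) ^ j * r ^ (finrank ℝ E * j)) := by gcongr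
      _ = _ := by ring

variable (E μ) in
theorem exists_harnack_constant_of_superlevelDecay (hR : 1 < R) (hM : 1 < M) (hθ₀ : 0 ≤ θ)
    (hθ₁ : θ < 1) :
    ∃ C > 0, ∀ (U : Set E) (u : E → ℝ) (x₀ : E) (r : ℝ), SuperlevelDecay μ R M θ U u →
      (∀ c, SuperlevelDecay μ R M θ U fun x => c - u x) → ContinuousOn u U → 0 < r →
      ball x₀ (R * r) ⊆ U → (∀ x ∈ ball x₀ (R * r), 0 ≤ u x) →
      ∀ x ∈ closedBall x₀ (r / 2), u x ≤ C * u x₀ := by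
  have hM₀ : 0 < M := by linarith
  obtain ⟨m, hm⟩ := exists_pow_lt_of_lt_one (one_half_pos (α := ℝ)) hθ₁
  obtain ⟨j, hj⟩ := exists_pow_lt_of_lt_one (inv_pos.2 hM₀) hθ₁
  have hMθ : M * θ ^ j ≤ 1 := (le_inv_mul_iff₀ hM₀).1 (by simpa using hj.le)
  set β := finrank ℝ E * j
  obtain ⟨τ, ⟨hτ₀, hτ₁⟩, hτ⟩ : ∃ τ ∈ Ioo (0 : ℝ) 1, 1 < (1 + 1 / (2 * M ^ m)) * (1 - τ) ^ β :=
    exists_one_lt_mul_one_sub_pow (lt_add_of_pos_right 1 (by positivity)) β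
  refine ⟨2 ^ β * (2 * M * ((R / τ) ^ finrank ℝ E * 2) ^ j), by positivity,
    fun U u x₀ r hdecay hdecay_sub hc hr hU hnonneg p hp => ?_⟩
  have hclosed : closedBall x₀ r ⊆ ball x₀ (R * r) := closedBall_subset_ball (by nlinarith)
  obtain ⟨x₁, hx₁, hmax⟩ := (isCompact_closedBall x₀ r).exists_isMaxOn
    (f := fun x => u x * (r - dist x x₀) ^ β) ⟨x₀, mem_closedBall_self hr.le⟩
    ((hc.mono (hclosed.trans hU)).mul (by fun_prop))
  have hpr : p ∈ closedBall x₀ r := closedBall_subset_closedBall (by linarith) hp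
  rw [← div_le_iff₀' (by positivity)]
  refine le_of_forall_gt_imp_ge_of_dense fun h hh => ?_
  have hh₀ : 0 < h := (hnonneg x₀ (hclosed (mem_closedBall_self hr.le))).trans_lt hh
  rw [div_le_iff₀' (by positivity)]
  refine le_of_mul_le_mul_right ?_ (pow_pos (half_pos hr) β)
  calc u p * (r / 2) ^ β ≤ u p * (r - dist p x₀) ^ β := by
        have := hnonneg p (hclosed hpr)
        gcongr
        linarith [mem_closedBall.1 hp]
    _ ≤ u x₁ * (r - dist x₁ x₀) ^ β := hmax hpr
    _ ≤ 2 * M * ((R / τ) ^ finrank ℝ E * 2) ^ j * h * r ^ β :=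
      hdecay.mul_pow_le_of_isMaxOn hdecay_sub hR hM hθ₀ hm.le hMθ hτ₀ hτ₁ hτ.le hr hh₀ hU hnonneg
        hh.le hx₁ hmax
    _ = _ := by
      rw [div_pow r]
      field_simp

end Haar

theorem exists_harnack_constant (n : ℕ) [NeZero n] {lam Lam : ℝ} (hlam : 0 < lam)
    (hLam : lam ≤ Lam) :
    ∃ R > 1, ∃ C > 0, ∀ (U : Set (EucSp n)) (u : EucSp n → ℝ) (x₀ : EucSp n) (r : ℝ),
      InPucciStar n lam Lam 0 U u → ContinuousOn u U → 0 < r → ball x₀ (R * r) ⊆ U →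
      (∀ x ∈ ball x₀ (R * r), 0 ≤ u x) → ∀ x ∈ closedBall x₀ (r / 2), u x ≤ C * u x₀ := by
  obtain ⟨R, M, K, hR, hM, hK, hest⟩ := exists_pointToMeasureEstimate n hlam hLam
  have hK' : 1 ≤ (10 : ℝ) ^ Module.finrank ℝ (EucSp n) * K :=
    one_le_mul_of_one_le_of_one_le (one_le_pow₀ (by norm_num)) hK
  have hθ : 0 < (10 ^ Module.finrank ℝ (EucSp n) * K)⁻¹ := by positivity
  obtain ⟨C, hC, hharnack⟩ := exists_harnack_constant_of_superlevelDecay (EucSp n) volume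
    (R := R) (by linarith) hM (sub_nonneg.2 (inv_le_one_of_one_le₀ hK')) (sub_lt_self 1 hθ)
  refine ⟨R, by linarith, C, hC, fun U u x₀ r hu hc => hharnack U u x₀ r ?_ (fun c => ?_) hc⟩
  · exact (hest U u (hu.isPucciSupersolution hc)).superlevelDecay hc hR hM.le hK
  · exact (hest U _ (hu.isPucciSupersolution_const_sub hc c)).superlevelDecay
      (continuousOn_const.sub hc) hR hM.le hK

theorem exists_harnack_hopf_constant (n : ℕ) [NeZero n] {lam Lam : ℝ} (hlam : 0 < lam)
    (hLam : lam ≤ Lam) :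
    ∃ η > 0, ∀ (U : Set (EucSp n)) (u : EucSp n → ℝ) (z : EucSp n) (ρ : ℝ),
      InPucciStar n lam Lam 0 U u → ContinuousOn u U → ball z ρ ⊆ U →
      (∀ x ∈ ball z ρ, 0 ≤ u x) → ∀ x ∈ ball z ρ, η * u z * (1 - dist x z / ρ) ≤ u x := by
  obtain ⟨R, hR, C, hC, hharnack⟩ := exists_harnack_constant n hlam hLam
  have hκ : 0 < 1 / (2 * (R + 1)) := by positivity
  obtain ⟨η, hη, hopf⟩ := exists_hopf_constant n hlam hLam hκ
  refine ⟨η / C, by positivity, fun U u z ρ hu hc hU hnonneg x hx => ?_⟩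
  have hρ : 0 < ρ := pos_of_mem_ball hx
  have hlower (y : EucSp n) (hy : y ∈ closedBall z (1 / (2 * (R + 1)) * ρ)) : u z / C ≤ u y := by
    have hyz : dist z y ≤ ρ / (R + 1) / 2 := by
      rw [dist_comm]
      exact (mem_closedBall.1 hy).trans_eq (by field_simp)
    have hsub : ball y (R * (ρ / (R + 1))) ⊆ ball z ρ := by
      refine ball_subset_ball' ?_
      have hsum : R * (ρ / (R + 1)) + ρ / (R + 1) = ρ := by field_simp
      have : 0 < ρ / (R + 1) := by positivity
      linarith [dist_comm y z]
    rw [div_le_iff₀' hC]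
    exact hharnack U u y _ hu hc (by positivity) (hsub.trans hU) (fun w hw => hnonneg w (hsub hw))
      z hyz
  calc η / C * u z * (1 - dist x z / ρ) = η * (u z / C) * (1 - dist x z / ρ) := by ring
    _ ≤ u x := hopf u z ρ (u z / C) ((hu.isPucciSupersolution hc).mono hU) hnonneg hlower x hx

theorem exists_harnack_chain_constant (n : ℕ) [NeZero n] {lam Lam : ℝ} (hlam : 0 < lam)
    (hLam : lam ≤ Lam) (N : ℕ) :
    ∃ m > 0, ∀ (U A : Set (EucSp n)) (u : EucSp n → ℝ) (ρ : ℝ), InPucciStar n lam Lam 0 U u →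
      ContinuousOn u U → (∀ x ∈ U, 0 ≤ u x) → 0 < ρ → Convex ℝ A → (∀ a ∈ A, ball a ρ ⊆ U) →
      ∀ p ∈ A, ∀ q ∈ A, dist p q ≤ N * (ρ / 2) → m * u p ≤ u q := by
  obtain ⟨η, hη, hharnack⟩ := exists_harnack_hopf_constant n hlam hLam
  refine ⟨(η / 2) ^ N, by positivity, fun U A u ρ hu hc hnonneg hρ hA hU p hp q hq hpq => ?_⟩
  induction N generalizing q with
  | zero =>
    obtain rfl : p = q := by simpa using hpq
    simp
  | succ N ih =>
    set a := AffineMap.lineMap p q ((N : ℝ) / (N + 1))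
    have ha : a ∈ A := hA.lineMap_mem hp hq
      ⟨by positivity, (div_le_one₀ (by positivity)).2 (by linarith)⟩
    rw [Nat.cast_add_one, ← div_le_iff₀' (by positivity)] at hpq
    have hpa : dist p a ≤ N * (ρ / 2) := by
      rw [dist_left_lineMap, Real.norm_of_nonneg (by positivity)]
      calc (N : ℝ) / (N + 1) * dist p q = N * (dist p q / (N + 1)) := by ring
        _ ≤ N * (ρ / 2) := by gcongr
    have hqa : dist q a ≤ ρ / 2 := by
      rw [dist_right_lineMap, one_sub_div (by positivity), add_sub_cancel_left,
        Real.norm_of_nonneg (by positivity), one_div_mul_eq_div]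
      exact hpq
    have hua : 0 ≤ u a := hnonneg a (hU a ha (mem_ball_self hρ))
    have hdist : 1 / 2 ≤ 1 - dist q a / ρ := by
      rw [le_sub_comm, div_le_iff₀ hρ]
      linarith
    calc (η / 2) ^ (N + 1) * u p = η / 2 * ((η / 2) ^ N * u p) := by ring
      _ ≤ η / 2 * u a := by
        gcongr
        exact ih a ha hpa
      _ = η * u a * (1 / 2) := by ring
      _ ≤ η * u a * (1 - dist q a / ρ) := by gcongr
      _ ≤ u q := hharnack U u a ρ hu hc (hU a ha) (fun x hx => hnonneg x (hU a ha hx)) q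
        (mem_ball.2 (by linarith))

/-! ### Half balls -/

theorem isLinearMap_lastCoord (n : ℕ) : IsLinearMap ℝ (lastCoord n) where
  map_add x y := by
    unfold lastCoord
    split_ifs <;> simp
  map_smul c x := by
    unfold lastCoord
    split_ifs <;> simp

theorem lastCoord_lastBasis (n : ℕ) [NeZero n] : lastCoord n (lastBasis n) = 1 := by
  simp [lastCoord, lastBasis, NeZero.pos n]

theorem norm_lastBasis (n : ℕ) [NeZero n] : ‖lastBasis n‖ = 1 := by
  simp [lastBasis, NeZero.pos n]

theorem abs_lastCoord_le_norm {n : ℕ} (x : EucSp n) : |lastCoord n x| ≤ ‖x‖ := by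
  unfold lastCoord
  split_ifs
  · exact PiLp.norm_apply_le x _
  · simp

/-- The part of the unit half ball at distance at least `1 / 4` from its boundary. -/
def halfBallCore (n : ℕ) : Set (EucSp n) :=
  closedBall 0 (3 / 4) ∩ {x | 1 / 4 ≤ lastCoord n x}

theorem convex_halfBallCore (n : ℕ) : Convex ℝ (halfBallCore n) :=
  (convex_closedBall 0 (3 / 4)).inter (convex_halfSpace_ge (isLinearMap_lastCoord n) _)

theorem ball_subset_upperHalfBall {n : ℕ} {a : EucSp n} (ha : a ∈ halfBallCore n) :
    ball a (1 / 4) ⊆ upperHalfBall n 1 := by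
  intro x hx
  have hxa : |lastCoord n x - lastCoord n a| < 1 / 4 := by
    rw [← (isLinearMap_lastCoord n).map_sub]
    exact (abs_lastCoord_le_norm _).trans_lt (mem_ball_iff_norm.1 hx)
  have ha₂ : 1 / 4 ≤ lastCoord n a := ha.2
  refine ⟨ball_subset_ball' ?_ hx, by linarith [(abs_lt.1 hxa).1]⟩
  linarith [mem_closedBall.1 ha.1]

theorem half_smul_lastBasis_mem_halfBallCore (n : ℕ) [NeZero n] :
    (1 / 2 : ℝ) • lastBasis n ∈ halfBallCore n := by
  constructor
  · rw [mem_closedBall_zero_iff, norm_smul, norm_lastBasis]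
    norm_num
  · rw [mem_ofPred_eq, (isLinearMap_lastCoord n).map_smul, lastCoord_lastBasis]
    norm_num

theorem exists_mem_halfBallCore_dist_eq {n : ℕ} [NeZero n] {x : EucSp n}
    (hx : x ∈ upperHalfBall n (1 / 2)) :
    ∃ q ∈ halfBallCore n, dist x q = 1 / 4 - lastCoord n x / 2 := by
  have hx_norm : ‖x‖ < 1 / 2 := mem_ball_zero_iff.1 hx.1
  have hx_pos : 0 < lastCoord n x := hx.2
  have hx_le : lastCoord n x ≤ ‖x‖ := (le_abs_self _).trans (abs_lastCoord_le_norm x)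
  have hnorm : ‖(1 / 4 - lastCoord n x / 2) • lastBasis n‖ = 1 / 4 - lastCoord n x / 2 := by
    rw [norm_smul, norm_lastBasis, mul_one, Real.norm_of_nonneg (by linarith)]
  refine ⟨x + (1 / 4 - lastCoord n x / 2) • lastBasis n, ⟨?_, ?_⟩, ?_⟩
  · rw [mem_closedBall_zero_iff]
    linarith [norm_add_le x ((1 / 4 - lastCoord n x / 2) • lastBasis n)]
  · rw [mem_ofPred_eq, (isLinearMap_lastCoord n).map_add, (isLinearMap_lastCoord n).map_smul,
      lastCoord_lastBasis, smul_eq_mul, mul_one]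
    linarith
  · rw [dist_self_add_right, hnorm]

theorem stmt_3_general {n : ℕ} (hn : 0 < n) {lam Lam : ℝ} (hlam : 0 < lam) (hLam : lam ≤ Lam) :
    ∃ c : ℝ, 0 < c ∧ c < 1 ∧ ∀ u : EucSp n → ℝ, ContinuousOn u (upperHalfBall n 1) →
      InPucciStar n lam Lam 0 (upperHalfBall n 1) u → (∀ x ∈ upperHalfBall n 1, 0 ≤ u x) →
      1 ≤ u ((1 / 2 : ℝ) • lastBasis n) →
      ∀ x ∈ upperHalfBall n (1 / 2), c * lastCoord n x ≤ u x := by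
  have : NeZero n := ⟨hn.ne'⟩
  obtain ⟨η, hη, hhopf⟩ := exists_harnack_hopf_constant n hlam hLam
  obtain ⟨m, hm, hchain⟩ := exists_harnack_chain_constant n hlam hLam 12
  refine ⟨min (1 / 2) (2 * η * m), by positivity, (min_le_left _ _).trans_lt one_half_lt_one,
    fun u hc hu hnonneg hone x hx => ?_⟩
  have hx_pos : 0 < lastCoord n x := hx.2
  obtain ⟨q, hq, hxq⟩ := exists_mem_halfBallCore_dist_eq hx
  have hp := half_smul_lastBasis_mem_halfBallCore n
  have hq_sub := ball_subset_upperHalfBall hq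
  have hq_lower : m ≤ u q := by
    refine (le_mul_of_one_le_right hm.le hone).trans (hchain _ _ u (1 / 4) hu hc hnonneg
      (by norm_num) (convex_halfBallCore n) (fun a => ball_subset_upperHalfBall) _ hp q hq ?_)
    push_cast
    linarith [dist_triangle_right ((1 / 2 : ℝ) • lastBasis n) q 0, mem_closedBall.1 hp.1,
      mem_closedBall.1 hq.1]
  calc min (1 / 2) (2 * η * m) * lastCoord n x ≤ 2 * η * m * lastCoord n x := by
        gcongr
        exact min_le_right _ _
    _ ≤ 2 * η * u q * lastCoord n x := by gcongr
    _ = η * u q * (1 - dist x q / (1 / 4)) := by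
      rw [hxq]
      ring
    _ ≤ u x := hhopf _ u q (1 / 4) hu hc hq_sub (fun y hy => hnonneg y (hq_sub hy)) x
      (mem_ball.2 (by linarith))

/-- Lemma 2.1: if `u ∈ S(λ,Λ,0)` in `B₁⁺`, `u ≥ 0`, `u = 0` on `T₁` and `u(eₙ/2) ≥ 1`,
then `u(x) ≥ c xₙ` in `B⁺_{1/2}` for a constant `c ∈ (0,1)` depending only on `n, λ, Λ`. -/
theorem stmt_3 {n : ℕ} (hn : 2 ≤ n) (lam Lam : ℝ) (hlam : 0 < lam) (hLam : lam ≤ Lam) :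
    ∃ c : ℝ, 0 < c ∧ c < 1 ∧
      ∀ u : EucSp n → ℝ,
        ContinuousOn u (upperHalfBall n 1 ∪ flatPart n 1) →
        InPucciStar n lam Lam 0 (upperHalfBall n 1) u →
        (∀ x ∈ upperHalfBall n 1, 0 ≤ u x) →
        (∀ x ∈ flatPart n 1, u x = 0) →
        1 ≤ u ((1 / 2 : ℝ) • lastBasis n) →
        ∀ x ∈ upperHalfBall n (1 / 2), c * lastCoord n x ≤ u x := by
  obtain ⟨c, hc₀, hc₁, hc⟩ := stmt_3_general (two_pos.trans_le hn) hlam hLam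
  exact ⟨c, hc₀, hc₁, fun u hcont hu hnonneg _ hone =>
    hc u (hcont.mono subset_union_left) hu hnonneg hone⟩
end
end

section
/- Let 0 < η < 1, 0 ≤ θ < 1 with (1−θ)(1−η) ≥ 1/2, and c₀ > 0. Let ω : (0,1] → [0,∞) be nondecreasing with ω(1) ≤ c₀ and ∫₀¹ ω(r)/r dr ≤ c₀. Define the sequence (A_k)_{k≥0} by A₀ = c₀ and A_k = max(ω(η^{k−1}), θ·A_{k−1}) for k ≥ 1. Then ∑_{i=0}^{∞} A_i ≤ 6c₀. -/
open MeasureTheory Set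

/-!
Comparing `f r / r` with the constant `f (η ^ (k + 1)) / η ^ k` on each geometric interval
`(η ^ (k + 1), η ^ k]`, of length `(1 - η) η ^ k`, bounds `(1 - η) ∑ f (η ^ (k + 1))` by the
Dini integral of `f`. The recursion gives `A (k + 1) ≤ ω (η ^ k) + θ A k`; summing it and absorbing
the last term on the left bounds `(1 - θ) ∑ A k` by `A 0 + ω 1 + ∑ ω (η ^ (k + 1))`.
-/

open scoped ENNReal

theorem ofReal_one_sub_div_mul_le_setLIntegral_div {f : ℝ → ℝ≥0∞} {a b : ℝ} (hb : 0 < b)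
    (hf : MonotoneOn f (Icc a b)) :
    ENNReal.ofReal (1 - a / b) * f a ≤ ∫⁻ r in Ioc a b, f r / ENNReal.ofReal r := by
  calc ENNReal.ofReal (1 - a / b) * f a
      = f a / ENNReal.ofReal b * ENNReal.ofReal (b - a) := by
        rw [one_sub_div hb.ne', ENNReal.ofReal_div_of_pos hb]
        simp only [div_eq_mul_inv]
        ring
    _ = ∫⁻ _ in Ioc a b, f a / ENNReal.ofReal b := by rw [setLIntegral_const, Real.volume_Ioc]
    _ ≤ ∫⁻ r in Ioc a b, f r / ENNReal.ofReal r := by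
        refine setLIntegral_mono' measurableSet_Ioc fun r hr => ?_
        have hfr : f a ≤ f r :=
          hf (left_mem_Icc.2 (hr.1.le.trans hr.2)) (Ioc_subset_Icc_self hr) hr.1.le
        exact ENNReal.div_le_div hfr (ENNReal.ofReal_le_ofReal hr.2)

theorem ofReal_one_sub_mul_tsum_pow_succ_le_setLIntegral_div {f : ℝ → ℝ≥0∞} {η : ℝ} (hη0 : 0 < η)
    (hη1 : η ≤ 1) (hf : MonotoneOn f (Ioc 0 1)) :
    ENNReal.ofReal (1 - η) * ∑' k : ℕ, f (η ^ (k + 1)) ≤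
      ∫⁻ r in Ioc 0 1, f r / ENNReal.ofReal r := by
  have hpow_le (k : ℕ) : η ^ k ≤ 1 := pow_le_one₀ hη0.le hη1
  have hterm (k : ℕ) : ENNReal.ofReal (1 - η) * f (η ^ (k + 1)) ≤
      ∫⁻ r in Ioc (η ^ (k + 1)) (η ^ k), f r / ENNReal.ofReal r := by
    have hsub : Icc (η ^ (k + 1)) (η ^ k) ⊆ Ioc 0 1 := fun r hr =>
      ⟨(pow_pos hη0 _).trans_le hr.1, hr.2.trans (hpow_le k)⟩
    have hratio : η ^ (k + 1) / η ^ k = η := by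
      rw [pow_succ, mul_div_cancel_left₀ _ (pow_pos hη0 k).ne']
    simpa only [hratio] using
      ofReal_one_sub_div_mul_le_setLIntegral_div (pow_pos hη0 k) (hf.mono hsub)
  have hdisj : Pairwise (Function.onFun Disjoint fun k : ℕ => Ioc (η ^ (k + 1)) (η ^ k)) :=
    (pow_right_anti₀ hη0.le hη1).pairwise_disjoint_on_Ioc_succ
  calc ENNReal.ofReal (1 - η) * ∑' k : ℕ, f (η ^ (k + 1))
      = ∑' k : ℕ, ENNReal.ofReal (1 - η) * f (η ^ (k + 1)) := ENNReal.tsum_mul_left.symm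
    _ ≤ ∑' k : ℕ, ∫⁻ r in Ioc (η ^ (k + 1)) (η ^ k), f r / ENNReal.ofReal r :=
        ENNReal.tsum_le_tsum hterm
    _ = ∫⁻ r in ⋃ k : ℕ, Ioc (η ^ (k + 1)) (η ^ k), f r / ENNReal.ofReal r :=
        (lintegral_iUnion (fun _ => measurableSet_Ioc) hdisj _).symm
    _ ≤ ∫⁻ r in Ioc 0 1, f r / ENNReal.ofReal r :=
        lintegral_mono_set <| iUnion_subset fun k =>
          Ioc_subset_Ioc (pow_pos hη0 _).le (hpow_le k)

theorem one_sub_mul_sum_range_le_of_succ_le {R : Type*} [Ring R] [PartialOrder R]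
    [IsOrderedAddMonoid R] {A b : ℕ → R} {θ : R} (h : ∀ k, A (k + 1) ≤ b k + θ * A k) {n : ℕ}
    (hn : 0 ≤ A n) :
    (1 - θ) * ∑ k ∈ Finset.range n, A k ≤ A 0 + ∑ k ∈ Finset.range n, b k := by
  rw [sub_mul, one_mul, sub_le_iff_le_add]
  calc ∑ k ∈ Finset.range n, A k
      ≤ ∑ k ∈ Finset.range (n + 1), A k := by
        rw [Finset.sum_range_succ]
        exact le_add_of_nonneg_right hn
    _ = A 0 + ∑ k ∈ Finset.range n, A (k + 1) := by rw [Finset.sum_range_succ', add_comm]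
    _ ≤ A 0 + ∑ k ∈ Finset.range n, (b k + θ * A k) := by gcongr; exact h _
    _ = A 0 + ∑ k ∈ Finset.range n, b k + θ * ∑ k ∈ Finset.range n, A k := by
        rw [Finset.sum_add_distrib, Finset.mul_sum, add_assoc]

section MonotoneModulus

variable {ω : ℝ → ℝ} {η c : ℝ}

theorem sum_range_comp_pow_succ_le_div_one_sub (hη0 : 0 < η) (hη1 : η < 1)
    (hmono : MonotoneOn ω (Ioc 0 1)) (hnn : ∀ r ∈ Ioc (0 : ℝ) 1, 0 ≤ ω r) (hc : 0 ≤ c)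
    (hint : ∫⁻ r in Ioc (0 : ℝ) 1, ENNReal.ofReal (ω r / r) ≤ ENNReal.ofReal c) (n : ℕ) :
    ∑ k ∈ Finset.range n, ω (η ^ (k + 1)) ≤ c / (1 - η) := by
  have hη : 0 < 1 - η := sub_pos.2 hη1
  have hω (k : ℕ) : 0 ≤ ω (η ^ (k + 1)) := hnn _ ⟨pow_pos hη0 _, pow_le_one₀ hη0.le hη1.le⟩
  rw [le_div_iff₀' hη, ← ENNReal.ofReal_le_ofReal_iff hc]
  calc ENNReal.ofReal ((1 - η) * ∑ k ∈ Finset.range n, ω (η ^ (k + 1)))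
      = ENNReal.ofReal (1 - η) * ∑ k ∈ Finset.range n, ENNReal.ofReal (ω (η ^ (k + 1))) := by
        rw [ENNReal.ofReal_mul hη.le, ENNReal.ofReal_sum_of_nonneg fun k _ => hω k]
    _ ≤ ENNReal.ofReal (1 - η) * ∑' k : ℕ, ENNReal.ofReal (ω (η ^ (k + 1))) := by
        gcongr
        exact ENNReal.sum_le_tsum _
    _ ≤ ∫⁻ r in Ioc (0 : ℝ) 1, ENNReal.ofReal (ω r) / ENNReal.ofReal r :=
        ofReal_one_sub_mul_tsum_pow_succ_le_setLIntegral_div hη0 hη1.le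
          (ENNReal.ofReal_mono.comp_monotoneOn hmono)
    _ = ∫⁻ r in Ioc (0 : ℝ) 1, ENNReal.ofReal (ω r / r) :=
        setLIntegral_congr_fun measurableSet_Ioc fun r hr => (ENNReal.ofReal_div_of_pos hr.1).symm
    _ ≤ ENNReal.ofReal c := hint

theorem sum_range_comp_pow_le_add_div_one_sub (hη0 : 0 < η) (hη1 : η < 1)
    (hmono : MonotoneOn ω (Ioc 0 1)) (hnn : ∀ r ∈ Ioc (0 : ℝ) 1, 0 ≤ ω r) (hc : 0 ≤ c)
    (hint : ∫⁻ r in Ioc (0 : ℝ) 1, ENNReal.ofReal (ω r / r) ≤ ENNReal.ofReal c) (n : ℕ) :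
    ∑ k ∈ Finset.range n, ω (η ^ k) ≤ ω 1 + c / (1 - η) := by
  calc ∑ k ∈ Finset.range n, ω (η ^ k)
      ≤ ∑ k ∈ Finset.range (n + 1), ω (η ^ k) := by
        rw [Finset.sum_range_succ]
        exact le_add_of_nonneg_right (hnn _ ⟨pow_pos hη0 n, pow_le_one₀ hη0.le hη1.le⟩)
    _ = ω 1 + ∑ k ∈ Finset.range n, ω (η ^ (k + 1)) := by
        rw [Finset.sum_range_succ', pow_zero, add_comm]
    _ ≤ ω 1 + c / (1 - η) := by
        gcongr
        exact sum_range_comp_pow_succ_le_div_one_sub hη0 hη1 hmono hnn hc hint n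

end MonotoneModulus

theorem stmt_11_general (η θ c₀ : ℝ) (hη0 : 0 < η) (hη1 : η < 1) (hθ0 : 0 ≤ θ) (hθ1 : θ < 1)
    (ω : ℝ → ℝ) (hmono : MonotoneOn ω (Ioc 0 1)) (hnn : ∀ r ∈ Ioc (0 : ℝ) 1, 0 ≤ ω r)
    (hω1 : ω 1 ≤ c₀)
    (hint : ∫⁻ r in Ioc (0 : ℝ) 1, ENNReal.ofReal (ω r / r) ≤ ENNReal.ofReal c₀)
    (A : ℕ → ℝ) (hA0 : A 0 = c₀)
    (hA : ∀ k : ℕ, A (k + 1) = max (ω (η ^ k)) (θ * A k)) (N : ℕ) :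
    ∑ i ∈ Finset.range N, A i ≤ (3 - 2 * η) / ((1 - θ) * (1 - η)) * c₀ := by
  have hη : 0 < 1 - η := sub_pos.2 hη1
  have hθ : 0 < 1 - θ := sub_pos.2 hθ1
  have hc₀ : 0 ≤ c₀ := (hnn 1 (right_mem_Ioc.2 one_pos)).trans hω1
  have hω (k : ℕ) : 0 ≤ ω (η ^ k) := hnn _ ⟨pow_pos hη0 k, pow_le_one₀ hη0.le hη1.le⟩
  have hA_nonneg : ∀ k, 0 ≤ A k
    | 0 => hA0 ▸ hc₀
    | k + 1 => hA k ▸ le_max_of_le_left (hω k)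
  have hstep (k : ℕ) : A (k + 1) ≤ ω (η ^ k) + θ * A k :=
    (hA k).trans_le (max_le_add_of_nonneg (hω k) (mul_nonneg hθ0 (hA_nonneg k)))
  have hsum : (1 - θ) * ∑ i ∈ Finset.range N, A i ≤ c₀ + (c₀ + c₀ / (1 - η)) :=
    calc (1 - θ) * ∑ i ∈ Finset.range N, A i
        ≤ A 0 + ∑ k ∈ Finset.range N, ω (η ^ k) :=
          one_sub_mul_sum_range_le_of_succ_le hstep (hA_nonneg N)
      _ ≤ A 0 + (ω 1 + c₀ / (1 - η)) := by
          gcongr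
          exact sum_range_comp_pow_le_add_div_one_sub hη0 hη1 hmono hnn hc₀ hint N
      _ ≤ c₀ + (c₀ + c₀ / (1 - η)) := by rw [hA0]; gcongr
  calc ∑ i ∈ Finset.range N, A i
      ≤ (c₀ + (c₀ + c₀ / (1 - η))) / (1 - θ) := (le_div_iff₀' hθ).2 hsum
    _ = (3 - 2 * η) / ((1 - θ) * (1 - η)) * c₀ := by
        field_simp
        ring

/-- The summation estimate (4.4): if `(1−θ)(1−η) ≥ 1/2`, `ω : (0,1] → [0,∞)` is
nondecreasing with `ω(1) ≤ c₀` and `∫₀¹ ω(r)/r dr ≤ c₀`, and `A₀ = c₀`,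
`A_k = max(ω(η^{k−1}), θ A_{k−1})`, then `∑_{i=0}^∞ A_i ≤ 6c₀`. -/
theorem stmt_11 (η θ c₀ : ℝ) (hη0 : 0 < η) (hη1 : η < 1) (hθ0 : 0 ≤ θ) (hθ1 : θ < 1)
    (hηθ : 1 / 2 ≤ (1 - θ) * (1 - η)) (hc₀ : 0 < c₀)
    (ω : ℝ → ℝ) (hmono : MonotoneOn ω (Ioc 0 1)) (hnn : ∀ r ∈ Ioc (0 : ℝ) 1, 0 ≤ ω r)
    (hω1 : ω 1 ≤ c₀)
    (hint : ∫⁻ r in Ioc (0 : ℝ) 1, ENNReal.ofReal (ω r / r) ≤ ENNReal.ofReal c₀)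
    (A : ℕ → ℝ) (hA0 : A 0 = c₀)
    (hA : ∀ k : ℕ, A (k + 1) = max (ω (η ^ k)) (θ * A k)) :
    ∀ N : ℕ, ∑ i ∈ Finset.range N, A i ≤ 6 * c₀ := by
  intro N
  have hconst : (3 - 2 * η) / ((1 - θ) * (1 - η)) ≤ 6 := by
    rw [div_le_iff₀ (by linarith)]
    linarith
  exact (stmt_11_general η θ c₀ hη0 hη1 hθ0 hθ1 ω hmono hnn hω1 hint A hA0 hA N).trans
    (mul_le_mul_of_nonneg_right hconst hc₀.le)
end
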